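/- arXiv:2202.05225 — 3 statements merged into one kernel-verified Lean document; each statement's English description precedes it below -/
import Mathlib

section
/- Let m ≥ 2, let a_i, b_i, c_i ∈ ℝ (i = 1, …, m) satisfy Σ_i a_i = Σ_i b_i = Σ_i c_i = 0, and let p, r ∈ ℝ. Then the following are equivalent: (i) for every permutation σ of {1,…,m}, p·D_σ = r·E_σ; (ii) either b_i = 0 for all i = 1, …, m, or there exists q ∈ ℝ such that p·a_i + q·b_i + r·c_i = 0 for all i = 1, …, m. -/
open Finset

/-- `D_σ` for real data `a, b`. -/
noncomputable def Dperm {m : ℕ} (a b : Fin m → ℝ) (σ : Equiv.Perm (Fin m)) : ℝ :=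
  (∑ i, ∑ j ∈ Ioi i, a (σ i) * b (σ j)) + (1 / 2) * ∑ i, a i * b i

/-!
The form `∑_{i<j} a_i b_j + ½ ∑_i a_i b_i` is half the sum of the alternating form
`W(a, b) = ∑_{i<j} (a_i b_j - a_j b_i)` and the product `(∑ a_i) (∑ b_i)`. Since `∑ b_i = 0`, only
the alternating part survives in `D_σ` and in `E_σ`, and condition (i) says that
`W (x ∘ σ) (b ∘ σ) = 0` for every `σ`, where `x = p a + r c`. Exchanging two neighbouring entries
`i < j` changes `W` by twice the minor `x_i b_j - x_j b_i` alone, so all these minors vanish, that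
is, `x` and `b` are proportional. Conversely, `W` is the sum of the minors.
-/

theorem forall_mul_eq_mul_iff_eq_zero_or_exists {α K : Type*} [Field K] {x y : α → K} :
    (∀ u v, x u * y v = x v * y u) ↔ (∀ i, y i = 0) ∨ ∃ q, ∀ i, x i = q * y i := by
  constructor
  · intro h
    refine or_iff_not_imp_left.mpr fun hy ↦ ?_
    obtain ⟨v, hv⟩ := not_forall.mp hy
    exact ⟨x v / y v, fun i ↦ by rw [div_mul_eq_mul_div, eq_div_iff hv, h]⟩
  · rintro (hy | ⟨q, hq⟩) u v
    · rw [hy, hy, mul_zero, mul_zero]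
    · rw [hq, hq]
      ring

section LinearOrder

variable {ι : Type*} [LinearOrder ι]

theorem swap_lt_swap_of_covBy {i j k l : ι} (hij : i ⋖ j) (hkl : k < l) (hne : ¬(k = i ∧ l = j)) :
    Equiv.swap i j k < Equiv.swap i j l := by
  have hlt : i < j := hij.lt
  have hk : k ≤ i ∨ j ≤ k := (le_or_gt k i).imp_right hij.ge_of_gt
  have hl : l ≤ i ∨ j ≤ l := (le_or_gt l i).imp_right hij.ge_of_gt
  grind

variable [Fintype ι] [LocallyFiniteOrderTop ι]

section OrderedSum

variable {M : Type*} [AddCommMonoid M]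

theorem sum_Ioi_add_sum_Ioi_add_sum_diag (f : ι → ι → M) :
    ∑ i, ∑ j ∈ Ioi i, f i j + ∑ i, ∑ j ∈ Ioi i, f j i + ∑ i, f i i = ∑ i, ∑ j, f i j := by
  let : LocallyFiniteOrderBot ι := .ofIic ι (fun a ↦ {k | k ≤ a}) (by simp)
  calc
    _ = ∑ i, ∑ j ∈ Ioi i, (f j i + f i j) + ∑ i, f i i := by
      simp only [sum_add_distrib, add_comm]
    _ = ∑ i, (∑ j ∈ {i}ᶜ, f j i + f i i) := by
      rw [sum_sum_Ioi_add_eq_sum_sum_off_diag, sum_add_distrib]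
    _ = ∑ i, ∑ j, f j i := sum_congr rfl fun i _ ↦ (Fintype.sum_eq_sum_compl_add i (f · i)).symm
    _ = ∑ i, ∑ j, f i j := sum_comm

theorem sum_Ioi_swap_add_of_covBy {i j : ι} (hij : i ⋖ j) (f : ι → ι → M) :
    ∑ k, ∑ l ∈ Ioi k, f (Equiv.swap i j k) (Equiv.swap i j l) + f i j =
      ∑ k, ∑ l ∈ Ioi k, f k l + f j i := by
  let pairs : Finset (ι × ι) := {q | q.1 < q.2}
  have sum_pairs (g : ι → ι → M) :
      ∑ k, ∑ l ∈ Ioi k, g k l = ∑ q ∈ pairs.erase (i, j), g q.1 q.2 + g i j := by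
    rw [sum_erase_add _ _ (by simp [pairs, hij.lt])]
    exact (sum_finset_product' pairs univ Ioi (by simp [pairs])).symm
  have sum_rest : ∑ q ∈ pairs.erase (i, j), f (Equiv.swap i j q.1) (Equiv.swap i j q.2) =
      ∑ q ∈ pairs.erase (i, j), f q.1 q.2 := by
    have maps : ∀ q ∈ pairs.erase (i, j),
        Prod.map (Equiv.swap i j) (Equiv.swap i j) q ∈ pairs.erase (i, j) := by
      rintro ⟨k, l⟩ hq
      obtain ⟨hne, hkl⟩ : ¬(k = i ∧ l = j) ∧ k < l := by simpa [pairs] using hq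
      have hpair : ¬(k = j ∧ l = i) := fun h ↦ hij.lt.asymm (h.1 ▸ h.2 ▸ hkl)
      simpa [pairs, Equiv.swap_apply_eq_iff, swap_lt_swap_of_covBy hij hkl hne] using hpair
    exact sum_nbij' _ _ maps maps (by simp) (by simp) (by simp)
  rw [sum_pairs, sum_pairs, sum_rest, Equiv.swap_apply_left, Equiv.swap_apply_right]
  exact add_right_comm _ _ _

end OrderedSum

section Wedge

variable {R : Type*} [CommRing R]

/-- The alternating form `∑_{i<j} (x_i y_j - x_j y_i)`, the sum of the `2 × 2` minors of the matrix
with rows `x` and `y`; it is twice the alternating part of `orderedPairing`. -/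
def orderedWedge (x y : ι → R) : R :=
  ∑ i, ∑ j ∈ Ioi i, (x i * y j - x j * y i)

theorem orderedWedge_swap (x y : ι → R) : orderedWedge y x = -orderedWedge x y := by
  simp only [orderedWedge, ← sum_neg_distrib, neg_sub, mul_comm]

theorem orderedWedge_add_left (x x' y : ι → R) :
    orderedWedge (x + x') y = orderedWedge x y + orderedWedge x' y := by
  simp only [orderedWedge, ← sum_add_distrib, Pi.add_apply]
  exact sum_congr rfl fun i _ ↦ sum_congr rfl fun j _ ↦ by ring

theorem orderedWedge_smul_left (p : R) (x y : ι → R) :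
    orderedWedge (p • x) y = p * orderedWedge x y := by
  simp only [orderedWedge, mul_sum, Pi.smul_apply, smul_eq_mul, mul_sub, mul_assoc]

theorem orderedWedge_comp_swap_of_covBy {i j : ι} (hij : i ⋖ j) (x y : ι → R) :
    orderedWedge (x ∘ Equiv.swap i j) (y ∘ Equiv.swap i j) =
      orderedWedge x y - 2 * (x i * y j - x j * y i) := by
  have h := sum_Ioi_swap_add_of_covBy hij fun k l ↦ x k * y l - x l * y k
  simp only [orderedWedge, Function.comp_apply]
  linear_combination h

theorem forall_perm_orderedWedge_eq_zero_iff [NoZeroDivisors R] [NeZero (2 : R)] {x y : ι → R} :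
    (∀ σ : Equiv.Perm ι, orderedWedge (x ∘ σ) (y ∘ σ) = 0) ↔ ∀ u v, x u * y v = x v * y u := by
  refine ⟨fun h u v ↦ ?_, fun h σ ↦ ?_⟩
  · rcases eq_or_ne u v with rfl | huv
    · rfl
    have : Nontrivial ι := ⟨u, v, huv⟩
    obtain ⟨i, j, hij⟩ : ∃ i j : ι, i ⋖ j := by
      obtain ⟨i, j, hlt⟩ := exists_pair_lt ι
      exact ⟨i, exists_covBy_of_wellFoundedLT (not_isMax_of_lt hlt)⟩
    obtain ⟨σ, rfl, rfl⟩ : ∃ σ : Equiv.Perm ι, σ i = u ∧ σ j = v :=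
      MulAction.is_two_pretransitive_iff.mp
        (Equiv.Perm.isMultiplyPretransitive ι 2) hij.ne huv
    have hswap := orderedWedge_comp_swap_of_covBy hij (x ∘ σ) (y ∘ σ)
    rw [h σ, Function.comp_assoc, Function.comp_assoc, ← Equiv.Perm.coe_mul, h, zero_sub,
      zero_eq_neg, mul_eq_zero, or_iff_right two_ne_zero] at hswap
    exact sub_eq_zero.mp hswap
  · exact sum_eq_zero fun i _ ↦ sum_eq_zero fun j _ ↦ sub_eq_zero.mpr (h _ _)

end Wedge

section Field

variable {K : Type*} [Field K]

/-- The bilinear form `∑_{i<j} x_i y_j + ½ ∑_i x_i y_i`, for which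
`D_σ = orderedPairing (a ∘ σ) (b ∘ σ)` and `E_σ = orderedPairing (b ∘ σ) (c ∘ σ)`. -/
def orderedPairing (x y : ι → K) : K :=
  ∑ i, ∑ j ∈ Ioi i, x i * y j + (1 / 2) * ∑ i, x i * y i

theorem two_mul_orderedPairing [NeZero (2 : K)] (x y : ι → K) :
    2 * orderedPairing x y = orderedWedge x y + (∑ i, x i) * ∑ i, y i := by
  have hsum := sum_Ioi_add_sum_Ioi_add_sum_diag fun i j ↦ x i * y j
  rw [← sum_mul_sum] at hsum
  simp only [orderedPairing, orderedWedge, sum_sub_distrib]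
  field_simp
  linear_combination hsum

theorem mul_orderedPairing_eq_mul_orderedPairing_iff [NeZero (2 : K)] {b : ι → K}
    (hb : ∑ i, b i = 0) (a c : ι → K) (p r : K) :
    p * orderedPairing a b = r * orderedPairing b c ↔ orderedWedge (p • a + r • c) b = 0 := by
  have hab : 2 * orderedPairing a b = orderedWedge a b := by
    rw [two_mul_orderedPairing, hb, mul_zero, add_zero]
  have hbc : 2 * orderedPairing b c = -orderedWedge c b := by
    rw [two_mul_orderedPairing, hb, zero_mul, add_zero, orderedWedge_swap]
  have hwedge : orderedWedge (p • a + r • c) b =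
      2 * (p * orderedPairing a b - r * orderedPairing b c) := by
    rw [orderedWedge_add_left, orderedWedge_smul_left, orderedWedge_smul_left]
    linear_combination (-p) * hab + r * hbc
  rw [hwedge, mul_eq_zero, or_iff_right two_ne_zero, sub_eq_zero]

theorem stmt3_general [NeZero (2 : K)] (a b c : ι → K) (hb : ∑ i, b i = 0) (p r : K) :
    (∀ σ : Equiv.Perm ι,
        p * orderedPairing (a ∘ σ) (b ∘ σ) = r * orderedPairing (b ∘ σ) (c ∘ σ)) ↔
      (∀ i, b i = 0) ∨ ∃ q : K, ∀ i, p * a i + q * b i + r * c i = 0 := by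
  have hbσ (σ : Equiv.Perm ι) : ∑ i, (b ∘ σ) i = 0 := (Equiv.sum_comp σ b).trans hb
  calc
    _ ↔ ∀ σ : Equiv.Perm ι, orderedWedge ((p • a + r • c) ∘ σ) (b ∘ σ) = 0 :=
      forall_congr' fun σ ↦ mul_orderedPairing_eq_mul_orderedPairing_iff (hbσ σ) _ _ p r
    _ ↔ (∀ i, b i = 0) ∨ ∃ q, ∀ i, (p • a + r • c) i = q * b i :=
      forall_perm_orderedWedge_eq_zero_iff.trans forall_mul_eq_mul_iff_eq_zero_or_exists
    _ ↔ _ := or_congr_right <| (Equiv.neg K).exists_congr fun q ↦ forall_congr' fun i ↦ by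
      simp only [Pi.add_apply, Pi.smul_apply, smul_eq_mul, Equiv.neg_apply]
      constructor <;> intro h <;> linear_combination h

end Field

end LinearOrder

theorem Dperm_eq_orderedPairing_comp {m : ℕ} (a b : Fin m → ℝ) (σ : Equiv.Perm (Fin m)) :
    Dperm a b σ = orderedPairing (a ∘ σ) (b ∘ σ) := by
  simp only [Dperm, orderedPairing, Function.comp_apply, Equiv.sum_comp σ fun i ↦ a i * b i]

theorem stmt3 (m : ℕ) (hm : 2 ≤ m) (a b c : Fin m → ℝ)
    (ha : ∑ i, a i = 0) (hb : ∑ i, b i = 0) (hc : ∑ i, c i = 0)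
    (p r : ℝ) :
    (∀ σ : Equiv.Perm (Fin m), p * Dperm a b σ = r * Dperm b c σ) ↔
      ((∀ i, b i = 0) ∨ ∃ q : ℝ, ∀ i, p * a i + q * b i + r * c i = 0) := by
  simpa only [Dperm_eq_orderedPairing_comp] using stmt3_general a b c hb p r
end

section
/- Let B_1, B_2, B_3, B_4 ∈ UT(4,ℤ) satisfy Σ_{i=1}^4 φ0(B_i) = 0 and suppose the ℝ≥0-cone generated by φ0(B_1), φ0(B_2), φ0(B_3), φ0(B_4) equals ℝ³. Then the ℝ≥0-cone generated by the set {τ(B(σ,t)) : σ a permutation of {1,2,3,4}, t ∈ ℤ≥0}, viewed in ℝ³, equals all of ℝ³. -/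
open Finset

/-- The 4×4 upper unitriangular integer matrix `UT(a,b,c;d,e,f)`. -/
def UT (a b c d e f : ℤ) : Matrix (Fin 4) (Fin 4) ℤ :=
  !![1, a, d, f; 0, 1, b, e; 0, 0, 1, c; 0, 0, 0, 1]

/-- The set `UT(4,ℤ)` of 4×4 upper unitriangular integer matrices. -/
def UT4 : Set (Matrix (Fin 4) (Fin 4) ℤ) :=
  {M | ∃ a b c d e f, M = UT a b c d e f}

/-- `φ0 : UT(4,ℤ) → ℤ³`, `UT(a,b,c;d,e,f) ↦ (a,b,c)`. -/
def phi0 (M : Matrix (Fin 4) (Fin 4) ℤ) : Fin 3 → ℤ :=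
  ![M 0 1, M 1 2, M 2 3]

/-- `φ0` followed by the embedding `ℤ³ → ℝ³`. -/
def phi0R (M : Matrix (Fin 4) (Fin 4) ℤ) : Fin 3 → ℝ :=
  fun i => (phi0 M i : ℝ)

/-- `τ : U_1 → ℤ³`, `U_1(d,e,f) ↦ (d,e,f)`, followed by the embedding `ℤ³ → ℝ³`. -/
def tauR (M : Matrix (Fin 4) (Fin 4) ℤ) : Fin 3 → ℝ :=
  ![(M 0 2 : ℝ), (M 1 3 : ℝ), (M 0 3 : ℝ)]

/-- `B(σ,t) = B_{σ(1)}^t ⋯ B_{σ(m)}^t` (ordered product). -/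
def Bprod {m : ℕ} (B : Fin m → Matrix (Fin 4) (Fin 4) ℤ) (σ : Equiv.Perm (Fin m))
    (t : ℕ) : Matrix (Fin 4) (Fin 4) ℤ :=
  ((List.finRange m).map (fun i => (B (σ i)) ^ t)).prod

/-- The `ℝ≥0`-cone generated by a finite family of vectors in `ℝⁿ`. -/
def coneFin {k n : ℕ} (v : Fin k → (Fin n → ℝ)) : Set (Fin n → ℝ) :=
  {x | ∃ r : Fin k → ℝ, (∀ i, 0 ≤ r i) ∧ x = ∑ i, r i • v i}

/-- The `ℝ≥0`-cone generated by a set `S ⊆ ℝⁿ`: all finite nonnegative real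
linear combinations of elements of `S`. -/
def coneOfSet {n : ℕ} (S : Set (Fin n → ℝ)) : Set (Fin n → ℝ) :=
  {x | ∃ (l : ℕ) (r : Fin l → ℝ) (v : Fin l → (Fin n → ℝ)),
    (∀ i, 0 ≤ r i) ∧ (∀ i, v i ∈ S) ∧ x = ∑ i, r i • v i}

/-!
Write `X_i` for the superdiagonal matrix with entries `φ0(B_i)`. Conjugating `B(σ,t)` by
`diag(1, t, t², t³)` gives, as `t → ∞`, the product `P(σ)` of the `exp X_i` in the order `σ`, so the
top coefficients of the entries of `B(σ,t)` are entries of `P(σ)`. If `∑ X_i = 0`, the average of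
`P(σ)` over all `σ` is the identity. Hence a linear form vanishing at `1` and nonnegative on every
`P(σ)` vanishes on every `P(σ)`.

By separation of convex sets it suffices to show `w = 0` when `w` is nonnegative on all
`τ(B(σ,t))`. At order `t³` this says `0 ≤ w₂ P(σ)₁₄`, with equality by averaging. Alternating sums
over the orders of the first three factors turn `P(σ)₁₄` into `[[X_i, X_j], X_k]₁₄`, and these are
not all zero as the `φ0(B_i)` span; so `w₂ = 0`. At order `t²`, swapping the first two factors in
`w₀ P(σ)₁₃ + w₁ P(σ)₂₄ = 0` makes `w₀ [X_i, X_j]₁₃ + w₁ [X_i, X_j]₂₄` vanish, so `w₀ = w₁ = 0`.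
-/

open Matrix Filter Topology

section Convexity

lemma eq_univ_of_convex_of_dense {E : Type*} [NormedAddCommGroup E] [NormedSpace ℝ E]
    [FiniteDimensional ℝ E] {C : Set E} (hC : Convex ℝ C) (hd : Dense C) : C = Set.univ := by
  have haff : affineSpan ℝ C = ⊤ := by
    have hcl : IsClosed (affineSpan ℝ C : Set E) := AffineSubspace.closed_of_finiteDimensional _
    exact SetLike.coe_injective <| hcl.closure_eq.symm.trans
      (hd.mono (subset_affineSpan ℝ C)).closure_eq
  have hint := hC.interior_nonempty_iff_affineSpan_eq_top.2 haff
  have h := hC.interior_closure_eq_interior_of_nonempty_interior hint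
  rw [hd.closure_eq, interior_univ] at h
  exact Set.univ_subset_iff.1 (h.trans_subset interior_subset)

lemma hull_subset_coneOfSet {n : ℕ} (S : Set (Fin n → ℝ)) :
    (PointedCone.hull ℝ S : Set (Fin n → ℝ)) ⊆ coneOfSet S := by
  intro x hx
  obtain ⟨k, r, v, rfl⟩ := Submodule.mem_span_set'.1 hx
  exact ⟨k, fun i => r i, fun i => v i, fun i => (r i).2, fun i => (v i).2, rfl⟩

lemma dense_hull_of_forall_dotProduct_nonneg {n : ℕ} {S : Set (Fin n → ℝ)}
    (hS : ∀ w : Fin n → ℝ, (∀ v ∈ S, 0 ≤ w ⬝ᵥ v) → w = 0) :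
    Dense (PointedCone.hull ℝ S : Set (Fin n → ℝ)) := by
  intro x
  by_contra hx
  obtain ⟨f, hf, hfx⟩ := ProperCone.hyperplane_separation_point
    (Submodule.closure (PointedCone.hull ℝ S)) hx
  obtain ⟨w, hw⟩ := (dotProductEquiv ℝ (Fin n)).surjective f
  have hfw (v : Fin n → ℝ) : f v = w ⬝ᵥ v := (LinearMap.congr_fun hw v).symm
  have hw0 : w = 0 := hS w fun v hv =>
    (hf v (subset_closure (PointedCone.subset_hull hv))).trans_eq (hfw v)
  rw [hfw, hw0, zero_dotProduct] at hfx
  exact lt_irrefl 0 hfx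

lemma coneOfSet_eq_univ {n : ℕ} {S : Set (Fin n → ℝ)}
    (hS : ∀ w : Fin n → ℝ, (∀ v ∈ S, 0 ≤ w ⬝ᵥ v) → w = 0) : coneOfSet S = Set.univ := by
  rw [← Set.univ_subset_iff, ← eq_univ_of_convex_of_dense (PointedCone.convex _)
    (dense_hull_of_forall_dotProduct_nonneg hS)]
  exact hull_subset_coneOfSet S

lemma span_eq_top_of_coneFin_eq_univ {k n : ℕ} {v : Fin k → Fin n → ℝ}
    (hv : coneFin v = Set.univ) : Submodule.span ℝ (Set.range v) = ⊤ := by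
  refine Submodule.eq_top_iff'.2 fun x => ?_
  obtain ⟨r, -, rfl⟩ : x ∈ coneFin v := hv ▸ Set.mem_univ x
  exact Submodule.sum_mem _ fun i _ =>
    Submodule.smul_mem _ _ (Submodule.subset_span (Set.mem_range_self i))

end Convexity

section SpanningFamilies

variable {R ι : Type*} [CommRing R]

lemma eq_zero_of_forall_dotProduct_eq_zero {n : Type*} [Fintype n] {x : ι → n → R}
    (hx : Submodule.span R (Set.range x) = ⊤) {w : n → R} (hw : ∀ i, w ⬝ᵥ x i = 0) : w = 0 := by
  classical
  exact (dotProductEquiv R n).map_eq_zero_iff.1 (LinearMap.ext_on_range hx hw)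

lemma eq_zero_of_forall_dotProduct_cross_eq_zero {x : ι → Fin 3 → R}
    (hx : Submodule.span R (Set.range x) = ⊤) {w : Fin 3 → R}
    (hw : ∀ i j, w ⬝ᵥ x i ⨯₃ x j = 0) : w = 0 := by
  have hcross : crossProduct w = 0 := LinearMap.ext_on_range hx fun i => by
    refine eq_zero_of_forall_dotProduct_eq_zero hx fun j => ?_
    rw [dotProduct_comm, triple_product_permutation, hw]
  have h₁ : w ⨯₃ ![1, 0, 0] = 0 := LinearMap.congr_fun hcross _
  have h₂ : w ⨯₃ ![0, 1, 0] = 0 := LinearMap.congr_fun hcross _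
  simp only [cross_apply] at h₁ h₂
  ext i
  fin_cases i
  · simpa using congrFun h₂ 2
  · simpa using congrFun h₁ 2
  · simpa using congrFun h₁ 1

end SpanningFamilies

section TripleBracket

variable {R ι : Type*} [CommRing R]

/-- The `(1,4)` entry of the iterated commutator `[[X, Y], Z]` of the superdiagonal matrices with
entries `x`, `y`, `z`. The `(1,3)` and `(2,4)` entries of `[X, Y]` are the coordinates `2` and `0`
of `x ⨯₃ y`. -/
def tripleBracket (x y z : Fin 3 → R) : R :=
  (x ⨯₃ y) 2 * z 2 - (x ⨯₃ y) 0 * z 0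

lemma tripleBracket_self (x z : Fin 3 → R) : tripleBracket x x z = 0 := by
  simp only [tripleBracket, cross_self, Pi.zero_apply, zero_mul, sub_zero]

lemma tripleBracket_swap (x y z : Fin 3 → R) : tripleBracket y x z = -tripleBracket x y z := by
  rw [tripleBracket, ← cross_anticomm, tripleBracket, Pi.neg_apply, Pi.neg_apply]
  ring

lemma tripleBracket_sub_left (w x y z : Fin 3 → R) :
    tripleBracket (w - x) y z = tripleBracket w y z - tripleBracket x y z := by
  simp only [tripleBracket, map_sub, LinearMap.sub_apply, Pi.sub_apply]
  ring

lemma tripleBracket_sum_left [Fintype ι] (x : ι → Fin 3 → R) (y z : Fin 3 → R) :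
    tripleBracket (∑ i, x i) y z = ∑ i, tripleBracket (x i) y z := by
  simp only [tripleBracket, map_sum, LinearMap.sum_apply, Finset.sum_apply, Finset.sum_mul,
    Finset.sum_sub_distrib]

lemma tripleBracket_sum_middle [Fintype ι] (x z : Fin 3 → R) (y : ι → Fin 3 → R) :
    tripleBracket x (∑ i, y i) z = ∑ i, tripleBracket x (y i) z := by
  simp only [tripleBracket, map_sum, Finset.sum_apply, Finset.sum_mul, Finset.sum_sub_distrib]

lemma sum_tripleBracket_sum_sub [Fintype ι] (x : ι → Fin 3 → R) :
    ∑ p, (∑ i, tripleBracket (∑ j, x j - x p) (x i) (x i)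
        - tripleBracket (∑ j, x j - x p) (x p) (x p)) =
      (Fintype.card ι - 2) * ∑ i, tripleBracket (∑ j, x j) (x i) (x i) := by
  have hcross : ∑ p, ∑ i, tripleBracket (x p) (x i) (x i) =
      ∑ i, tripleBracket (∑ j, x j) (x i) (x i) := by
    rw [Finset.sum_comm]
    exact Finset.sum_congr rfl fun i _ => (tripleBracket_sum_left _ _ _).symm
  simp only [tripleBracket_sub_left, tripleBracket_self, sub_zero, Finset.sum_sub_distrib, hcross,
    Finset.sum_const, Finset.card_univ, nsmul_eq_mul]
  ring

lemma tripleBracket_eq_zero_of_distinct [Fintype ι] {x : ι → Fin 3 → R} (hsum : ∑ i, x i = 0)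
    (h : ∀ i j k, i ≠ j → i ≠ k → j ≠ k → tripleBracket (x i) (x j) (x k) = 0) (i j k : ι) :
    tripleBracket (x i) (x j) (x k) = 0 := by
  have hrep (i j : ι) : tripleBracket (x i) (x j) (x j) = 0 := by
    rcases eq_or_ne i j with rfl | hij
    · exact tripleBracket_self _ _
    calc tripleBracket (x i) (x j) (x j)
        = ∑ k, tripleBracket (x i) (x k) (x j) := by
          symm
          refine Fintype.sum_eq_single (f := fun k => tripleBracket (x i) (x k) (x j)) j
            fun k hkj => ?_
          rcases eq_or_ne i k with rfl | hik
          · exact tripleBracket_self _ _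
          · exact h i k j hik hij hkj
      _ = tripleBracket (x i) (∑ k, x k) (x j) := (tripleBracket_sum_middle _ _ _).symm
      _ = 0 := by simp [hsum, tripleBracket]
  rcases eq_or_ne i j with rfl | hij
  · exact tripleBracket_self _ _
  rcases eq_or_ne j k with rfl | hjk
  · exact hrep i j
  rcases eq_or_ne i k with rfl | hik
  · rw [tripleBracket_swap, hrep, neg_zero]
  · exact h i j k hij hik hjk

lemma exists_tripleBracket_ne_zero [Nontrivial R] {x : ι → Fin 3 → R}
    (hspan : Submodule.span R (Set.range x) = ⊤) :
    ∃ i j k, tripleBracket (x i) (x j) (x k) ≠ 0 := by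
  by_contra! h
  have hcross (i j : ι) : ![-(x i ⨯₃ x j) 0, 0, (x i ⨯₃ x j) 2] = 0 := by
    refine eq_zero_of_forall_dotProduct_eq_zero hspan fun k => ?_
    refine Eq.trans ?_ (h i j k)
    rw [tripleBracket, vec3_dotProduct]
    simp only [Matrix.cons_val]
    ring
  have hw : (![0, 0, 1] : Fin 3 → R) = 0 := by
    refine eq_zero_of_forall_dotProduct_cross_eq_zero hspan fun i j => ?_
    have h₂ : (x i ⨯₃ x j) 2 = 0 := congrFun (hcross i j) 2
    rw [vec3_dotProduct, h₂]
    simp only [Matrix.cons_val]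
    ring
  simpa using congrFun hw 2

end TripleBracket

section ExpProd

variable {K ι : Type*} [Field K]

/-- The exponential of the superdiagonal matrix `x₀E₁₂ + x₁E₂₃ + x₂E₃₄`, written out: the limit of
the rescaled powers of a unitriangular matrix `M` with `φ0(M) = x`. -/
def expSuperdiag (x : Fin 3 → K) : Matrix (Fin 4) (Fin 4) K :=
  !![1, x 0, x 0 * x 1 / 2, x 0 * x 1 * x 2 / 6;
     0, 1, x 1, x 1 * x 2 / 2;
     0, 0, 1, x 2;
     0, 0, 0, 1]

/-- The ordered product of the exponentials `expSuperdiag (x i)`, for `i` running through `l`. -/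
def expProd (x : ι → Fin 3 → K) (l : List ι) : Matrix (Fin 4) (Fin 4) K :=
  (l.map fun i => expSuperdiag (x i)).prod

lemma expProd_cons (x : ι → Fin 3 → K) (i : ι) (l : List ι) :
    expProd x (i :: l) = expSuperdiag (x i) * expProd x l := by
  simp only [expProd, List.map_cons, List.prod_cons]

lemma expSuperdiag_mul_apply_zero (x : Fin 3 → K) (M : Matrix (Fin 4) (Fin 4) K) (q : Fin 4) :
    (expSuperdiag x * M) 0 q =
      M 0 q + x 0 * M 1 q + x 0 * x 1 / 2 * M 2 q + x 0 * x 1 * x 2 / 6 * M 3 q := by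
  simp [mul_apply, Fin.sum_univ_four, expSuperdiag]

lemma expSuperdiag_mul_apply_one (x : Fin 3 → K) (M : Matrix (Fin 4) (Fin 4) K) (q : Fin 4) :
    (expSuperdiag x * M) 1 q = M 1 q + x 1 * M 2 q + x 1 * x 2 / 2 * M 3 q := by
  simp [mul_apply, Fin.sum_univ_four, expSuperdiag]

lemma expSuperdiag_mul_apply_two (x : Fin 3 → K) (M : Matrix (Fin 4) (Fin 4) K) (q : Fin 4) :
    (expSuperdiag x * M) 2 q = M 2 q + x 2 * M 3 q := by
  simp [mul_apply, Fin.sum_univ_four, expSuperdiag]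

lemma expSuperdiag_mul_apply_three (x : Fin 3 → K) (M : Matrix (Fin 4) (Fin 4) K) (q : Fin 4) :
    (expSuperdiag x * M) 3 q = M 3 q := by
  simp [mul_apply, Fin.sum_univ_four, expSuperdiag]

lemma expProd_apply_of_le (x : ι → Fin 3 → K) (l : List ι) {p q : Fin 4} (hqp : q ≤ p) :
    expProd x l p q = (1 : Matrix (Fin 4) (Fin 4) K) p q := by
  induction l generalizing p q with
  | nil => simp only [expProd, List.map_nil, List.prod_nil]
  | cons i l ih =>
    rw [expProd_cons, mul_apply, Fin.sum_univ_four]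
    fin_cases p <;> fin_cases q <;> simp_all [expSuperdiag]

lemma expProd_swap_apply_zero_two (x : ι → Fin 3 → K) (i j : ι) (l : List ι) :
    expProd x (i :: j :: l) 0 2 - expProd x (j :: i :: l) 0 2 = (x i ⨯₃ x j) 2 := by
  have h₂₂ : expProd x l 2 2 = 1 := expProd_apply_of_le x l le_rfl
  have h₃₂ : expProd x l 3 2 = 0 := expProd_apply_of_le x l (by decide)
  have hcross : (x i ⨯₃ x j) 2 = x i 0 * x j 1 - x i 1 * x j 0 := rfl
  simp only [expProd_cons, expSuperdiag_mul_apply_zero, expSuperdiag_mul_apply_one,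
    expSuperdiag_mul_apply_two, expSuperdiag_mul_apply_three, h₂₂, h₃₂, hcross]
  ring

lemma expProd_swap_apply_one_three (x : ι → Fin 3 → K) (i j : ι) (l : List ι) :
    expProd x (i :: j :: l) 1 3 - expProd x (j :: i :: l) 1 3 = (x i ⨯₃ x j) 0 := by
  have h₃₃ : expProd x l 3 3 = 1 := expProd_apply_of_le x l le_rfl
  have hcross : (x i ⨯₃ x j) 0 = x i 1 * x j 2 - x i 2 * x j 1 := rfl
  simp only [expProd_cons, expSuperdiag_mul_apply_one, expSuperdiag_mul_apply_two,
    expSuperdiag_mul_apply_three, h₃₃, hcross]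
  ring

lemma expProd_triple_apply_zero_three (x : ι → Fin 3 → K) (i j k : ι) (l : List ι) :
    expProd x (i :: j :: k :: l) 0 3 - expProd x (j :: i :: k :: l) 0 3
      - (expProd x (k :: i :: j :: l) 0 3 - expProd x (k :: j :: i :: l) 0 3)
      = tripleBracket (x i) (x j) (x k) := by
  have h₃₃ : expProd x l 3 3 = 1 := expProd_apply_of_le x l le_rfl
  have hcross₀ : (x i ⨯₃ x j) 0 = x i 1 * x j 2 - x i 2 * x j 1 := rfl
  have hcross₂ : (x i ⨯₃ x j) 2 = x i 0 * x j 1 - x i 1 * x j 0 := rfl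
  simp only [expProd_cons, expSuperdiag_mul_apply_zero, expSuperdiag_mul_apply_one,
    expSuperdiag_mul_apply_two, expSuperdiag_mul_apply_three, h₃₃, tripleBracket, hcross₀, hcross₂]
  ring

end ExpProd

section Average

-- The orderings are grouped by their first element `p`; `swap 0 p` lets `1, …, n` index the others.
lemma sum_perm_map_finRange_prod {R : Type*} [Semiring R] {n : ℕ} (f : Fin (n + 1) → R) :
    ∑ σ : Equiv.Perm (Fin (n + 1)), (((List.finRange (n + 1)).map σ).map f).prod =
      ∑ p, f p * ∑ τ : Equiv.Perm (Fin n),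
        (((List.finRange n).map τ).map fun i => f (Equiv.swap 0 p i.succ)).prod := by
  rw [← Equiv.Perm.decomposeFin.symm.sum_comp, Fintype.sum_prod_type]
  refine Finset.sum_congr rfl fun p _ => ?_
  rw [Finset.mul_sum]
  refine Finset.sum_congr rfl fun τ _ => ?_
  simp [List.finRange_succ, Function.comp_def]

lemma sum_swap_zero_succ {A : Type*} [AddCommGroup A] {n : ℕ} (f : Fin (n + 1) → A)
    (p : Fin (n + 1)) : ∑ i : Fin n, f (Equiv.swap 0 p i.succ) = ∑ i, f i - f p := by
  rw [eq_sub_iff_add_eq', ← Equiv.sum_comp (Equiv.swap 0 p) f, Fin.sum_univ_succ,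
    Equiv.swap_apply_left]

variable {K : Type*} [Field K]

/-- The average of the products of the `exp X_i` over all orderings (see `sum_perm_expProd`), where
`X_i` is superdiagonal with entries `x i`. With `S = ∑ X_i` it equals
`exp S + (1/12) ∑ [[S, X_i], X_i]`, and the last term only has a `(1,4)` entry. -/
def meanExpProd {ι : Type*} [Fintype ι] (x : ι → Fin 3 → K) : Matrix (Fin 4) (Fin 4) K :=
  expSuperdiag (∑ i, x i) + single 0 3 ((∑ i, tripleBracket (∑ j, x j) (x i) (x i)) / 12)

lemma expSuperdiag_zero : expSuperdiag (0 : Fin 3 → K) = 1 := by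
  ext i j
  fin_cases i <;> fin_cases j <;> simp [expSuperdiag]

lemma meanExpProd_of_sum_eq_zero {ι : Type*} [Fintype ι] {x : ι → Fin 3 → K}
    (hx : ∑ i, x i = 0) : meanExpProd x = 1 := by
  simp [meanExpProd, hx, expSuperdiag_zero, tripleBracket]

lemma expSuperdiag_mul_single_zero_three (x : Fin 3 → K) (c : K) :
    expSuperdiag x * single 0 3 c = single 0 3 c := by
  ext i j
  fin_cases i <;> fin_cases j <;> simp [expSuperdiag, mul_apply, single]

lemma expSuperdiag_mul_expSuperdiag_sub [CharZero K] (x s : Fin 3 → K) :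
    expSuperdiag x * expSuperdiag (s - x) =
      expSuperdiag s + single 0 2 ((x ⨯₃ s) 2 / 2) + single 1 3 ((x ⨯₃ s) 0 / 2) +
        single 0 3 (((x ⨯₃ s) 2 * s 2 - (x ⨯₃ s) 1 * s 1) / 6) +
        single 0 3 (tripleBracket s x x / 6) := by
  ext i j
  fin_cases i <;> fin_cases j <;>
    simp [expSuperdiag, mul_apply, Fin.sum_univ_four, cross_apply, tripleBracket] <;> ring

lemma sum_expSuperdiag_mul_expSuperdiag_sub [CharZero K] {ι : Type*} [Fintype ι]
    (x : ι → Fin 3 → K) :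
    ∑ p, expSuperdiag (x p) * expSuperdiag (∑ i, x i - x p) =
      (Fintype.card ι : K) • expSuperdiag (∑ i, x i) +
        single 0 3 ((∑ i, tripleBracket (∑ j, x j) (x i) (x i)) / 6) := by
  have hcross (q : Fin 3) : ∑ p, (x p ⨯₃ ∑ i, x i) q = 0 := by
    rw [← Finset.sum_apply, ← LinearMap.sum_apply, ← map_sum, cross_self, Pi.zero_apply]
  have hsingle (i j : Fin 4) (c : ι → K) :
      ∑ p, single i j (c p) = single i j (∑ p, c p) :=
    (map_sum (singleAddMonoidHom i j) c Finset.univ).symm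
  simp only [expSuperdiag_mul_expSuperdiag_sub, Finset.sum_add_distrib, hsingle, ← Finset.sum_div,
    Finset.sum_sub_distrib, ← Finset.sum_mul, hcross, zero_mul, sub_zero, zero_div, single_zero,
    add_zero, Finset.sum_const, Finset.card_univ, Nat.cast_smul_eq_nsmul]

lemma sum_expSuperdiag_mul_meanExpProd [CharZero K] {n : ℕ} (x : Fin (n + 1) → Fin 3 → K) :
    ∑ p, expSuperdiag (x p) * meanExpProd (fun i : Fin n => x (Equiv.swap 0 p i.succ)) =
      (n + 1 : K) • meanExpProd x := by
  have hsum (p : Fin (n + 1)) : ∑ i : Fin n, x (Equiv.swap 0 p i.succ) = ∑ i, x i - x p :=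
    sum_swap_zero_succ x p
  have hbracket (p : Fin (n + 1)) (s : Fin 3 → K) :
      ∑ i : Fin n, tripleBracket s (x (Equiv.swap 0 p i.succ)) (x (Equiv.swap 0 p i.succ)) =
        ∑ i, tripleBracket s (x i) (x i) - tripleBracket s (x p) (x p) :=
    sum_swap_zero_succ (fun i => tripleBracket s (x i) (x i)) p
  have hsingle (c : Fin (n + 1) → K) :
      ∑ p, single (0 : Fin 4) (3 : Fin 4) (c p) = single 0 3 (∑ p, c p) :=
    (map_sum (singleAddMonoidHom 0 3) c Finset.univ).symm
  simp only [meanExpProd, hsum, hbracket, mul_add, expSuperdiag_mul_single_zero_three,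
    Finset.sum_add_distrib, sum_expSuperdiag_mul_expSuperdiag_sub, hsingle, ← Finset.sum_div,
    sum_tripleBracket_sum_sub, smul_add, smul_single, Fintype.card_fin, add_assoc, ← single_add,
    Nat.cast_add, Nat.cast_one, smul_eq_mul]
  congr 2
  ring

lemma sum_perm_expProd [CharZero K] {n : ℕ} (x : Fin n → Fin 3 → K) :
    ∑ σ : Equiv.Perm (Fin n), expProd x ((List.finRange n).map σ) =
      (n.factorial : K) • meanExpProd x := by
  induction n with
  | zero => simp [expProd, meanExpProd_of_sum_eq_zero]
  | succ n ih =>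
    calc ∑ σ : Equiv.Perm (Fin (n + 1)), expProd x ((List.finRange (n + 1)).map σ)
        = ∑ p, expSuperdiag (x p) * ∑ τ : Equiv.Perm (Fin n),
            expProd (fun i => x (Equiv.swap 0 p i.succ)) ((List.finRange n).map τ) :=
          sum_perm_map_finRange_prod fun i => expSuperdiag (x i)
      _ = (n.factorial : K) • ∑ p, expSuperdiag (x p) *
            meanExpProd (fun i : Fin n => x (Equiv.swap 0 p i.succ)) := by
          simp only [ih, mul_smul_comm, Finset.smul_sum]
      _ = ((n + 1).factorial : K) • meanExpProd x := by
          rw [sum_expSuperdiag_mul_meanExpProd, smul_smul, Nat.factorial_succ, mul_comm]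
          push_cast
          rfl

end Average

section SignArgument

lemma exists_perm_map_finRange_eq {m : ℕ} {l : List (Fin m)} (hl : l.Perm (List.finRange m)) :
    ∃ σ : Equiv.Perm (Fin m), (List.finRange m).map σ = l := by
  have hlen : l.length = m := hl.length_eq.trans List.length_finRange
  have hnd : l.Nodup := hl.nodup_iff.2 (List.nodup_finRange m)
  have hmem (i : Fin m) : i ∈ l := hl.mem_iff.2 (List.mem_finRange i)
  refine ⟨(finCongr hlen.symm).trans (hnd.getEquivOfForallMemList l hmem), ?_⟩
  exact List.ext_getElem (by simp [hlen]) (by simp)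

lemma exists_append_perm_finRange {m : ℕ} {l : List (Fin m)} (hl : l.Nodup) :
    ∃ r, (l ++ r).Perm (List.finRange m) := by
  obtain ⟨l', hl', hsub⟩ := hl.subperm fun i _ => List.mem_finRange i
  obtain ⟨r, hr⟩ := hsub.exists_perm_append
  exact ⟨r, (hl'.symm.append_right r).trans hr.symm⟩

variable {K : Type*} [Field K] [LinearOrder K] [IsStrictOrderedRing K]
  {m : ℕ} {x : Fin m → Fin 3 → K}

lemma map_expProd_eq_zero (hsum : ∑ i, x i = 0) (φ : Matrix (Fin 4) (Fin 4) K →ₗ[K] K)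
    (hφ : φ 1 = 0)
    (hnonneg : ∀ σ : Equiv.Perm (Fin m), 0 ≤ φ (expProd x ((List.finRange m).map σ)))
    {l : List (Fin m)} (hl : l.Perm (List.finRange m)) : φ (expProd x l) = 0 := by
  obtain ⟨σ, rfl⟩ := exists_perm_map_finRange_eq hl
  have htotal : ∑ σ : Equiv.Perm (Fin m), φ (expProd x ((List.finRange m).map σ)) = 0 := by
    rw [← map_sum, sum_perm_expProd, meanExpProd_of_sum_eq_zero hsum, map_smul, hφ, smul_zero]
  exact (Finset.sum_eq_zero_iff_of_nonneg fun σ _ => hnonneg σ).1 htotal σ (Finset.mem_univ σ)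

lemma eq_zero_of_forall_mul_expProd_nonneg (hsum : ∑ i, x i = 0)
    (hspan : Submodule.span K (Set.range x) = ⊤) {c : K}
    (hc : ∀ σ : Equiv.Perm (Fin m), 0 ≤ c * expProd x ((List.finRange m).map σ) 0 3) : c = 0 := by
  by_contra hc0
  have hzero {l : List (Fin m)} (hl : l.Perm (List.finRange m)) : expProd x l 0 3 = 0 :=
    (mul_eq_zero_iff_left hc0).1 <|
      map_expProd_eq_zero hsum (c • entryLinearMap K K 0 3) (by simp) hc hl
  obtain ⟨i, j, k, hne⟩ := exists_tripleBracket_ne_zero hspan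
  refine hne (tripleBracket_eq_zero_of_distinct hsum (fun i j k hij hik hjk => ?_) i j k)
  obtain ⟨r, hr⟩ := exists_append_perm_finRange (l := [i, j, k]) (by simp [hij, hik, hjk])
  have hijk : (i :: j :: k :: r).Perm (List.finRange m) := hr
  have hkij : (k :: i :: j :: r).Perm (List.finRange m) :=
    (List.perm_middle (l₁ := [i, j])).symm.trans hr
  rw [← expProd_triple_apply_zero_three x i j k r, hzero hijk,
    hzero ((List.Perm.swap i j _).trans hijk),
    hzero hkij, hzero (((List.Perm.swap i j r).cons k).trans hkij)]
  simp only [sub_zero]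

lemma eq_zero_of_forall_mul_expProd_add_nonneg (hsum : ∑ i, x i = 0)
    (hspan : Submodule.span K (Set.range x) = ⊤) {c d : K}
    (hcd : ∀ σ : Equiv.Perm (Fin m), 0 ≤ c * expProd x ((List.finRange m).map σ) 0 2 +
      d * expProd x ((List.finRange m).map σ) 1 3) : c = 0 ∧ d = 0 := by
  have hzero {l : List (Fin m)} (hl : l.Perm (List.finRange m)) :
      c * expProd x l 0 2 + d * expProd x l 1 3 = 0 :=
    map_expProd_eq_zero hsum (c • entryLinearMap K K 0 2 + d • entryLinearMap K K 1 3)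
      (by simp) hcd hl
  have hw : ![d, 0, c] = 0 := by
    refine eq_zero_of_forall_dotProduct_cross_eq_zero hspan fun i j => ?_
    rcases eq_or_ne i j with rfl | hij
    · rw [cross_self, dotProduct_zero]
    obtain ⟨r, hr⟩ := exists_append_perm_finRange (l := [i, j]) (by simp [hij])
    have hijr : (i :: j :: r).Perm (List.finRange m) := hr
    have hjir : (j :: i :: r).Perm (List.finRange m) := (List.Perm.swap i j r).trans hr
    rw [vec3_dotProduct, ← expProd_swap_apply_zero_two x i j r,
      ← expProd_swap_apply_one_three x i j r]
    simp only [Matrix.cons_val]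
    linear_combination hzero hijr - hzero hjir
  exact ⟨congrFun hw 2, congrFun hw 0⟩

end SignArgument

section Dilation

/-- Conjugation by the diagonal matrix with entries `1, t, t², …`, which divides the `(i,j)` entry
by `t ^ (j - i)`. It separates the orders of growth of the entries of unitriangular matrices. It is
only multiplicative for `t ≠ 0`, because of the convention `x / 0 = 0`. -/
def dilate {K : Type*} [Field K] {n : ℕ} (t : K) (M : Matrix (Fin n) (Fin n) K) :
    Matrix (Fin n) (Fin n) K :=
  of fun i j => t ^ (i : ℕ) * M i j / t ^ (j : ℕ)

variable {K : Type*} [Field K] {n : ℕ} {t : K}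

lemma dilate_one (ht : t ≠ 0) : dilate t (1 : Matrix (Fin n) (Fin n) K) = 1 := by
  ext i j
  rcases eq_or_ne i j with rfl | hij
  · simp [dilate, ht]
  · simp [dilate, hij]

lemma dilate_mul (ht : t ≠ 0) (M N : Matrix (Fin n) (Fin n) K) :
    dilate t (M * N) = dilate t M * dilate t N := by
  ext i j
  simp only [dilate, of_apply, mul_apply, Finset.mul_sum, Finset.sum_div]
  refine Finset.sum_congr rfl fun k _ => ?_
  field_simp

lemma dilate_list_prod (ht : t ≠ 0) (l : List (Matrix (Fin n) (Fin n) K)) :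
    dilate t l.prod = (l.map (dilate t)).prod := by
  induction l with
  | nil => exact dilate_one ht
  | cons M l ih => rw [List.prod_cons, dilate_mul ht, ih, List.map_cons, List.prod_cons]

end Dilation

section Asymptotics

lemma UT_pow (a b c d e f : ℤ) (t : ℕ) :
    UT a b c d e f ^ t = UT (t * a) (t * b) (t * c)
      (t * d + t.choose 2 * (a * b)) (t * e + t.choose 2 * (b * c))
      (t * f + t.choose 2 * (a * e + d * c) + t.choose 3 * (a * b * c)) := by
  induction t with
  | zero =>
    ext i j
    fin_cases i <;> fin_cases j <;> simp [UT]
  | succ t ih =>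
    rw [pow_succ, ih]
    have h₂ : (t + 1).choose 2 = t + t.choose 2 := by simp [Nat.choose_succ_succ' t 1]
    have h₃ : (t + 1).choose 3 = t.choose 2 + t.choose 3 := Nat.choose_succ_succ' t 2
    ext i j
    fin_cases i <;> fin_cases j <;> simp [UT, mul_apply, Fin.sum_univ_four, h₂, h₃] <;> ring

lemma tendsto_choose_div_pow (k : ℕ) :
    Tendsto (fun t : ℕ => (t.choose k : ℝ) / (t : ℝ) ^ k) atTop (𝓝 (1 / k.factorial)) := by
  have hunit : Tendsto (fun t : ℕ => t * (t : ℝ)⁻¹) atTop (𝓝 1) :=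
    tendsto_const_nhds.congr' <| by
      filter_upwards [eventually_ne_atTop 0] with t ht
      exact (mul_inv_cancel₀ (Nat.cast_ne_zero.2 ht)).symm
  simpa only [inv_pow, one_pow, div_eq_mul_inv] using
    ProbabilityTheory.tendsto_choose_mul_pow_atTop k hunit

lemma tendsto_choose_div_pow_of_lt {k l : ℕ} (hkl : k < l) :
    Tendsto (fun t : ℕ => (t.choose k : ℝ) / (t : ℝ) ^ l) atTop (𝓝 0) := by
  obtain ⟨j, rfl⟩ := Nat.exists_eq_add_of_lt hkl
  have h := (tendsto_choose_div_pow k).mul ((tendsto_inv_atTop_nhds_zero_nat (𝕜 := ℝ)).pow (j + 1))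
  rw [zero_pow j.succ_ne_zero, mul_zero] at h
  refine h.congr fun t => ?_
  rw [inv_pow, ← div_eq_mul_inv, div_div, ← pow_add, add_assoc]

lemma tendsto_div_sq_add_choose_two_div_sq (u v : ℝ) :
    Tendsto (fun t : ℕ => (t : ℝ) / (t : ℝ) ^ 2 * u + t.choose 2 / (t : ℝ) ^ 2 * v) atTop
      (𝓝 (v / 2)) := by
  have h₁ := tendsto_choose_div_pow_of_lt (k := 1) (l := 2) (by decide)
  have h₂ := tendsto_choose_div_pow 2
  simp only [Nat.choose_one_right] at h₁
  convert (h₁.mul_const u).add (h₂.mul_const v) using 2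
  norm_num [Nat.factorial, div_eq_inv_mul]

lemma tendsto_div_cube_add_choose_three_div_cube (u v r : ℝ) :
    Tendsto (fun t : ℕ => (t : ℝ) / (t : ℝ) ^ 3 * u + t.choose 2 / (t : ℝ) ^ 3 * v +
      t.choose 3 / (t : ℝ) ^ 3 * r) atTop (𝓝 (r / 6)) := by
  have h₁ := tendsto_choose_div_pow_of_lt (k := 1) (l := 3) (by decide)
  have h₂ := tendsto_choose_div_pow_of_lt (k := 2) (l := 3) (by decide)
  have h₃ := tendsto_choose_div_pow 3
  simp only [Nat.choose_one_right] at h₁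
  convert ((h₁.mul_const u).add (h₂.mul_const v)).add (h₃.mul_const r) using 2
  norm_num [Nat.factorial, div_eq_inv_mul]

lemma tendsto_dilate_pow {M : Matrix (Fin 4) (Fin 4) ℤ} (hM : M ∈ UT4) :
    Tendsto (fun t : ℕ => dilate (t : ℝ) ((Int.castRingHom ℝ).mapMatrix (M ^ t))) atTop
      (𝓝 (expSuperdiag (phi0R M))) := by
  obtain ⟨a, b, c, d, e, f, rfl⟩ := hM
  have hexplicit : (fun t : ℕ =>
      !![1, (a : ℝ), t / t ^ 2 * d + t.choose 2 / t ^ 2 * (a * b),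
          t / t ^ 3 * f + t.choose 2 / t ^ 3 * (a * e + d * c) + t.choose 3 / t ^ 3 * (a * b * c);
        0, 1, b, t / t ^ 2 * e + t.choose 2 / t ^ 2 * (b * c);
        0, 0, 1, c;
        0, 0, 0, 1]) =ᶠ[atTop]
      fun t : ℕ => dilate (t : ℝ) ((Int.castRingHom ℝ).mapMatrix (UT a b c d e f ^ t)) := by
    filter_upwards [eventually_ne_atTop 0] with t ht
    rw [UT_pow]
    ext i j
    fin_cases i <;> fin_cases j <;> simp [dilate, UT] <;> field_simp
  refine Tendsto.congr' hexplicit (tendsto_pi_nhds.2 fun i => tendsto_pi_nhds.2 fun j => ?_)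
  fin_cases i <;> fin_cases j <;>
    simp [expSuperdiag, phi0R, phi0, UT, tendsto_div_sq_add_choose_two_div_sq,
      tendsto_div_cube_add_choose_three_div_cube]

lemma tendsto_dilate_Bprod {m : ℕ} {B : Fin m → Matrix (Fin 4) (Fin 4) ℤ} (hB : ∀ i, B i ∈ UT4)
    (σ : Equiv.Perm (Fin m)) :
    Tendsto (fun t : ℕ => dilate (t : ℝ) ((Int.castRingHom ℝ).mapMatrix (Bprod B σ t))) atTop
      (𝓝 (expProd (fun i => phi0R (B i)) ((List.finRange m).map σ))) := by
  have hlist : Tendsto (fun t : ℕ => (((List.finRange m).map σ).map fun i =>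
      dilate (t : ℝ) ((Int.castRingHom ℝ).mapMatrix (B i ^ t))).prod) atTop
      (𝓝 (expProd (fun i => phi0R (B i)) ((List.finRange m).map σ))) :=
    tendsto_list_prod _ fun i _ => tendsto_dilate_pow (hB i)
  refine hlist.congr' ?_
  filter_upwards [eventually_ne_atTop 0] with t ht
  rw [Bprod, map_list_prod, dilate_list_prod (Nat.cast_ne_zero.2 ht)]
  simp only [List.map_map, Function.comp_def]

section LeadingCoefficient

variable {M : ℕ → Matrix (Fin 4) (Fin 4) ℤ} {P : Matrix (Fin 4) (Fin 4) ℝ} {w : Fin 3 → ℝ}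

lemma dotProduct_tauR (w : Fin 3 → ℝ) (M : Matrix (Fin 4) (Fin 4) ℤ) :
    w ⬝ᵥ tauR M = w 0 * M 0 2 + w 1 * M 1 3 + w 2 * M 0 3 :=
  vec3_dotProduct _ _

lemma mul_apply_zero_three_nonneg_of_tendsto_dilate
    (hM : Tendsto (fun t : ℕ => dilate (t : ℝ) ((Int.castRingHom ℝ).mapMatrix (M t))) atTop (𝓝 P))
    (hw : ∀ t, 0 ≤ w ⬝ᵥ tauR (M t)) : 0 ≤ w 2 * P 0 3 := by
  have hentry (i j : Fin 4) := tendsto_pi_nhds.1 (tendsto_pi_nhds.1 hM i) j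
  have hlim := (((hentry 0 2).const_mul (w 0)).add ((hentry 1 3).const_mul (w 1))).mul
    tendsto_inv_atTop_nhds_zero_nat |>.add ((hentry 0 3).const_mul (w 2))
  rw [mul_zero, zero_add] at hlim
  refine ge_of_tendsto hlim ?_
  filter_upwards [eventually_ne_atTop 0] with t ht
  have hscale := div_nonneg (hw t) (pow_nonneg (Nat.cast_nonneg (α := ℝ) t) 3)
  refine hscale.trans_eq ?_
  simp only [dotProduct_tauR, dilate, RingHom.mapMatrix_apply, Int.coe_castRingHom, map_apply,
    of_apply, Fin.coe_ofNat_eq_mod, Nat.zero_mod, pow_zero, one_mul, Nat.reduceMod, Nat.one_mod,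
    pow_one, Nat.mod_succ]
  field_simp

lemma mul_add_mul_nonneg_of_tendsto_dilate
    (hM : Tendsto (fun t : ℕ => dilate (t : ℝ) ((Int.castRingHom ℝ).mapMatrix (M t))) atTop (𝓝 P))
    (hw : ∀ t, 0 ≤ w ⬝ᵥ tauR (M t)) (hw₂ : w 2 = 0) : 0 ≤ w 0 * P 0 2 + w 1 * P 1 3 := by
  have hentry (i j : Fin 4) := tendsto_pi_nhds.1 (tendsto_pi_nhds.1 hM i) j
  refine ge_of_tendsto (((hentry 0 2).const_mul (w 0)).add ((hentry 1 3).const_mul (w 1))) ?_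
  filter_upwards [eventually_ne_atTop 0] with t ht
  have hscale := div_nonneg (hw t) (pow_nonneg (Nat.cast_nonneg (α := ℝ) t) 2)
  refine hscale.trans_eq ?_
  simp only [dotProduct_tauR, hw₂, zero_mul, add_zero, dilate, RingHom.mapMatrix_apply,
    Int.coe_castRingHom, map_apply, of_apply, Fin.coe_ofNat_eq_mod, Nat.zero_mod, pow_zero,
    one_mul, Nat.reduceMod, Nat.one_mod, pow_one, Nat.mod_succ]
  field_simp

end LeadingCoefficient

end Asymptotics

lemma sum_phi0R_eq_zero {ι : Type*} [Fintype ι] {B : ι → Matrix (Fin 4) (Fin 4) ℤ}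
    (hsum : ∑ i, phi0 (B i) = 0) : ∑ i, phi0R (B i) = 0 := by
  ext q
  have hq : ∑ i, phi0 (B i) q = 0 := by rw [← Finset.sum_apply, hsum, Pi.zero_apply]
  simp only [Finset.sum_apply, phi0R, ← Int.cast_sum, hq, Int.cast_zero, Pi.zero_apply]

theorem stmt8_general {m : ℕ} (B : Fin m → Matrix (Fin 4) (Fin 4) ℤ) (hB : ∀ i, B i ∈ UT4)
    (hsum : ∑ i, phi0 (B i) = 0)
    (hspan : Submodule.span ℝ (Set.range fun i => phi0R (B i)) = ⊤) :
    coneOfSet {v | ∃ (σ : Equiv.Perm (Fin m)) (t : ℕ), v = tauR (Bprod B σ t)} = Set.univ := by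
  have hsumR : ∑ i, phi0R (B i) = 0 := sum_phi0R_eq_zero hsum
  refine coneOfSet_eq_univ fun w hw => ?_
  have hnonneg (σ : Equiv.Perm (Fin m)) (t : ℕ) : 0 ≤ w ⬝ᵥ tauR (Bprod B σ t) :=
    hw _ ⟨σ, t, rfl⟩
  have hw₂ : w 2 = 0 := eq_zero_of_forall_mul_expProd_nonneg hsumR hspan fun σ =>
    mul_apply_zero_three_nonneg_of_tendsto_dilate (tendsto_dilate_Bprod hB σ) (hnonneg σ)
  obtain ⟨hw₀, hw₁⟩ := eq_zero_of_forall_mul_expProd_add_nonneg hsumR hspan fun σ =>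
    mul_add_mul_nonneg_of_tendsto_dilate (tendsto_dilate_Bprod hB σ) (hnonneg σ) hw₂
  ext q
  fin_cases q
  exacts [hw₀, hw₁, hw₂]

theorem stmt8 (B : Fin 4 → Matrix (Fin 4) (Fin 4) ℤ)
    (hB : ∀ i, B i ∈ UT4)
    (hsum : ∑ i, phi0 (B i) = 0)
    (hcone : coneFin (fun i => phi0R (B i)) = Set.univ) :
    coneOfSet {v | ∃ (σ : Equiv.Perm (Fin 4)) (t : ℕ), v = tauR (Bprod B σ t)} =
      Set.univ :=
  stmt8_general B hB hsum (span_eq_top_of_coneFin_eq_univ hcone)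
end

section
/- Let 𝒢 = {A_1, …, A_k} ⊂ UT(4,ℤ) with A_i = UT(α_i, β_i, κ_i; δ_i, ε_i, φ_i). Suppose the ℝ≥0-cone C generated by φ0(A_1), …, φ0(A_k) is a linear subspace of ℝ³ of dimension 2 (C = C ∩ (−C), dim C = 2), and let p, q, r ∈ ℤ with at most one of p, q, r equal to zero satisfy p α_i + q β_i + r κ_i = 0 for i = 1, …, k. If supp(L_0) = {1, …, k} (i.e., for every j there exists ℓ ∈ L_0 with ℓ_j > 0), then the identity matrix belongs to ⟨𝒢⟩. -/
/-
The elements whose `φ0`-image lies on the plane `p x + q y + r z = 0` form a group on which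
`g ↦ (φ0 g, p · 2Δ g − r · 2ℰ g)` is a homomorphism to an abelian group. The support condition says
that the images of the generators are invertible inside the image of `⟨𝒢⟩`, so every element
of `⟨𝒢⟩` can be completed to one in the kernel. The kernel is abelian and embeds into `ℤ²` by
`r · 2Δ + p · 2ℰ` and the corner entry, so one wants `0` in the subsemigroup of `ℤ²` so obtained.

If `φ0 g` and `φ0 h` are independent, completing `gⁿhⁿ` and `hⁿgⁿ` for large `n` gives kernel
elements with first coordinate of either sign, since commutators grow quadratically. Conjugation
by `u` shears the kernel, `(x, y) ↦ (x, y + μ x)`, where `μ` is a linear form in `φ0 u`; inserting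
a high power of a kernel element between `uᵐ` and a completion of `uᵐ`, or the other way round,
makes the second coordinate have either sign, too. A subsemigroup meeting all four open
quadrants contains `0`.
-/

open Finset

/-- Membership of an exponent vector `ℓ` in `L_0`:
`Σ ℓᵢ φ0(Aᵢ) = 0` and `p Σ ℓᵢΔᵢ − r Σ ℓᵢℰᵢ = 0`, where `Δᵢ = δᵢ − ½αᵢβᵢ` and
`ℰᵢ = εᵢ − ½βᵢκᵢ`. -/
def InL0 {k : ℕ} (A : Fin k → Matrix (Fin 4) (Fin 4) ℤ)
    (α β κ δ ε : Fin k → ℤ) (p r : ℤ) (ℓ : Fin k → ℕ) : Prop :=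
  (∑ i, (ℓ i : ℤ) • phi0 (A i) = 0) ∧
    (p : ℚ) * ∑ i, (ℓ i : ℚ) * ((δ i : ℚ) - (1 / 2) * (α i : ℚ) * (β i : ℚ))
      - (r : ℚ) * ∑ i, (ℓ i : ℚ) * ((ε i : ℚ) - (1 / 2) * (β i : ℚ) * (κ i : ℚ))
      = 0

section Semigroup

@[to_additive]
theorem pow_mem_of_ne_zero {M : Type*} [Monoid M] {S : Subsemigroup M} {g : M} (hg : g ∈ S)
    {n : ℕ} (hn : n ≠ 0) : g ^ n ∈ S := by
  obtain ⟨n, rfl⟩ := Nat.exists_eq_succ_of_ne_zero hn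
  induction n with
  | zero => simpa using hg
  | succ n ih => rw [pow_succ]; exact S.mul_mem (ih n.succ_ne_zero) hg

theorem zsmul_mem_of_pos {M : Type*} [AddGroup M] {C : AddSubsemigroup M} {c : M} (hc : c ∈ C)
    {n : ℤ} (hn : 0 < n) : n • c ∈ C := by
  lift n to ℕ using hn.le
  rw [natCast_zsmul]
  exact nsmul_mem_of_ne_zero hc (by lia)

variable {ι N : Type*} [Fintype ι]

theorem prod_pow_mem [CommMonoid N] {C : Subsemigroup N} {x : ι → N} (hx : ∀ i, x i ∈ C)
    {n : ι → ℕ} {j : ι} (hj : n j ≠ 0) : ∏ i, x i ^ n i ∈ C := by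
  classical
  rw [← Finset.prod_filter_of_ne (p := fun i => n i ≠ 0)
    fun i _ hi h0 => hi (by rw [h0, pow_zero])]
  exact Finset.prod_induction_nonempty _ (· ∈ C) (fun _ _ => C.mul_mem)
    ⟨j, Finset.mem_filter.2 ⟨Finset.mem_univ j, hj⟩⟩
    fun i hi => pow_mem_of_ne_zero (hx i) (Finset.mem_filter.1 hi).2

theorem inv_mem_of_prod_pow_eq_one [CommGroup N] {C : Subsemigroup N} {x : ι → N}
    (hx : ∀ i, x i ∈ C) {ℓ : ι → ℕ} (hℓ : ∏ i, x i ^ ℓ i = 1) {j : ι} (hj : ℓ j ≠ 0) :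
    (x j)⁻¹ ∈ C := by
  classical
  obtain ⟨m, rfl⟩ : ∃ m, ℓ = m + Pi.single j 1 := by
    refine ⟨ℓ - Pi.single j 1, (tsub_add_cancel_of_le fun i => ?_).symm⟩
    rcases eq_or_ne i j with rfl | hij
    · simpa [Nat.one_le_iff_ne_zero] using hj
    · simp [hij]
  have hsingle : ∏ i, x i ^ (Pi.single j 1 : ι → ℕ) i = x j := by
    simp [Pi.single_apply, pow_ite]
  have hm : (∏ i, x i ^ m i) * x j = 1 := by
    simpa only [Pi.add_apply, pow_add, Finset.prod_mul_distrib, hsingle] using hℓ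
  -- Using the relation once more keeps the exponent of `x j` positive.
  have hinv : (x j)⁻¹ = ∏ i, x i ^ (m + (m + Pi.single j 1 : ι → ℕ)) i := by
    simp only [Pi.add_apply, pow_add, Finset.prod_mul_distrib, hsingle, hm, mul_one]
    exact (eq_inv_of_mul_eq_one_left hm).symm
  rw [hinv]
  exact prod_pow_mem hx (j := j) (by simp)

end Semigroup

section LatticePlane

theorem eventually_pos_add_natCast_mul_mul (a : ℤ) {x : ℤ} (hx : x ≠ 0) :
    ∀ᶠ n : ℕ in Filter.atTop, 0 < (a + n * x) * x := by
  have h : Filter.Tendsto (fun n : ℕ => a * x + (n : ℤ) * (x * x)) Filter.atTop Filter.atTop :=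
    Filter.tendsto_atTop_add_const_left _ _
      (tendsto_natCast_atTop_atTop.atTop_mul_const' (mul_self_pos.2 hx))
  filter_upwards [h.eventually_gt_atTop 0] with n hn
  linarith

variable {C : AddSubsemigroup (ℤ × ℤ)}

theorem exists_mem_same_quadrant {c v : ℤ × ℤ} (hv₁ : v.1 ≠ 0) (hv₂ : v.2 ≠ 0)
    (h : ∀ n : ℕ, n ≠ 0 → c + n • v ∈ C) : ∃ w ∈ C, 0 < w.1 * v.1 ∧ 0 < w.2 * v.2 := by
  obtain ⟨n, h₁, h₂, hn⟩ := ((eventually_pos_add_natCast_mul_mul c.1 hv₁).and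
    ((eventually_pos_add_natCast_mul_mul c.2 hv₂).and (Filter.eventually_ne_atTop 0))).exists
  exact ⟨_, h n hn, by simpa using h₁, by simpa using h₂⟩

theorem zero_mk_mem_of_fst_pos_of_fst_neg {v w : ℤ × ℤ} (hv : v ∈ C) (hw : w ∈ C)
    (hv₁ : 0 < v.1) (hw₁ : w.1 < 0) : (0, v.1 * w.2 - w.1 * v.2) ∈ C := by
  convert C.add_mem (zsmul_mem_of_pos hw hv₁) (zsmul_mem_of_pos hv (neg_pos.2 hw₁)) using 1
  ext
  · simp [mul_comm]
  · simp only [zsmul_eq_mul, neg_smul, Prod.snd_add, Prod.snd_mul, Prod.snd_intCast, Int.cast_eq,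
      Prod.snd_neg]
    ring

theorem zero_mem_of_pos_of_neg {y z : ℤ} (hy : 0 < y) (hz : z < 0) (hyC : (0, y) ∈ C)
    (hzC : (0, z) ∈ C) : 0 ∈ C := by
  convert C.add_mem (zsmul_mem_of_pos hyC (neg_pos.2 hz)) (zsmul_mem_of_pos hzC hy) using 1
  ext <;> simp [mul_comm]

theorem zero_mem_of_quadrants {v w : ℤ × ℤ} (hv : v ∈ C) (hw : w ∈ C) (hv₁ : 0 < v.1)
    (hw₁ : w.1 < 0)
    (up : ∀ c ∈ C, c.1 ≠ 0 → ∃ c' ∈ C, 0 < c'.1 * c.1 ∧ 0 < c'.2)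
    (down : ∀ c ∈ C, c.1 ≠ 0 → ∃ c' ∈ C, 0 < c'.1 * c.1 ∧ c'.2 < 0) : 0 ∈ C := by
  obtain ⟨a, ha, hav, ha₂⟩ := up v hv hv₁.ne'
  obtain ⟨b, hb, hbw, hb₂⟩ := up w hw hw₁.ne
  obtain ⟨a', ha', hav', ha₂'⟩ := down v hv hv₁.ne'
  obtain ⟨b', hb', hbw', hb₂'⟩ := down w hw hw₁.ne
  replace hav := (pos_iff_pos_of_mul_pos hav).2 hv₁
  replace hbw := (neg_iff_neg_of_mul_pos hbw).2 hw₁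
  replace hav' := (pos_iff_pos_of_mul_pos hav').2 hv₁
  replace hbw' := (neg_iff_neg_of_mul_pos hbw').2 hw₁
  refine zero_mem_of_pos_of_neg ?_ ?_
    (zero_mk_mem_of_fst_pos_of_fst_neg ha hb hav hbw)
    (zero_mk_mem_of_fst_pos_of_fst_neg ha' hb' hav' hbw')
  · linarith [mul_pos hav hb₂, mul_neg_of_neg_of_pos hbw ha₂]
  · linarith [mul_neg_of_pos_of_neg hav' hb₂', mul_pos_of_neg_of_neg hbw' ha₂']

end LatticePlane

section CrossProduct

open Matrix

theorem span_coneFin {k n : ℕ} (v : Fin k → (Fin n → ℝ)) :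
    Submodule.span ℝ (coneFin v) = Submodule.span ℝ (Set.range v) := by
  apply le_antisymm <;> rw [Submodule.span_le]
  · rintro _ ⟨ρ, -, rfl⟩
    exact Submodule.sum_mem _ fun i _ =>
      Submodule.smul_mem _ _ (Submodule.subset_span (Set.mem_range_self i))
  · rintro _ ⟨j, rfl⟩
    refine Submodule.subset_span ⟨Pi.single j 1, fun i => ?_, ?_⟩
    · exact (Pi.single_nonneg.2 zero_le_one : (0 : Fin k → ℝ) ≤ Pi.single j 1) i
    · simp [Pi.single_apply]

theorem exists_linearIndependent_pair {K V ι : Type*} [DivisionRing K] [AddCommGroup V] [Module K V]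
    {v : ι → V} (h : Module.finrank K (Submodule.span K (Set.range v)) = 2) :
    ∃ i j, LinearIndependent K ![v i, v j] := by
  have : Module.Finite K (Submodule.span K (Set.range v)) :=
    Module.finite_of_finrank_pos (by lia)
  have hex := Submodule.exists_fun_fin_finrank_span_eq K (Set.range v)
  rw [h] at hex
  obtain ⟨f, hf, -, hli⟩ := hex
  obtain ⟨i, hi⟩ := hf 0
  obtain ⟨j, hj⟩ := hf 1
  exact ⟨i, j, by rwa [hi, hj, ← List.ofFn_inj.1 (by simp : List.ofFn f = List.ofFn ![f 0, f 1])]⟩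

theorem exists_crossProduct_phi0_ne_zero {k : ℕ} {A : Fin k → Matrix (Fin 4) (Fin 4) ℤ}
    (h : Module.finrank ℝ (Submodule.span ℝ (coneFin fun i => phi0R (A i))) = 2) :
    ∃ i j, phi0 (A i) ⨯₃ phi0 (A j) ≠ 0 := by
  rw [span_coneFin] at h
  obtain ⟨i, j, hij⟩ := exists_linearIndependent_pair h
  refine ⟨i, j, fun h0 => crossProduct_ne_zero_iff_linearIndependent.2 hij ?_⟩
  have hcast : phi0R (A i) ⨯₃ phi0R (A j) = fun m => ((phi0 (A i) ⨯₃ phi0 (A j)) m : ℝ) := by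
    ext m
    fin_cases m <;> simp [cross_apply, phi0R]
  rw [hcast, h0]
  ext m
  simp

variable {R : Type*} [CommRing R]

/-- The form `r (u₀v₁ - u₁v₀) + p (u₁v₂ - u₂v₁)`: it governs the non-additivity of `drift`. -/
def areaForm (p r : R) (u v : Fin 3 → R) : R := ![p, 0, r] ⬝ᵥ u ⨯₃ v

/-- The rate of the shear by which conjugation by an element with `φ0`-image `u` acts on the
kernel of `linearInvariant`. -/
def shearRate (p r : R) (u : Fin 3 → R) : R := ![p, 0, -r] ⬝ᵥ u

theorem shearRate_nsmul (p r : R) (n : ℕ) (u : Fin 3 → R) :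
    shearRate p r (n • u) = n * shearRate p r u := by
  rw [shearRate, dotProduct_smul, nsmul_eq_mul, shearRate]

theorem areaForm_swap (p r : R) (u v : Fin 3 → R) : areaForm p r v u = -areaForm p r u v := by
  rw [areaForm, areaForm, ← cross_anticomm, dotProduct_neg]

theorem areaForm_self (p r : R) (u : Fin 3 → R) : areaForm p r u u = 0 := by
  rw [areaForm, cross_self, dotProduct_zero]

theorem areaForm_neg_right (p r : R) (u v : Fin 3 → R) :
    areaForm p r u (-v) = -areaForm p r u v := by
  rw [areaForm, map_neg, dotProduct_neg, areaForm]

theorem areaForm_nsmul_nsmul (p r : R) (m n : ℕ) (u v : Fin 3 → R) :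
    areaForm p r (m • u) (n • v) = m * n * areaForm p r u v := by
  rw [areaForm, map_nsmul, map_nsmul, LinearMap.smul_apply, dotProduct_smul, dotProduct_smul,
    nsmul_eq_mul, nsmul_eq_mul, ← mul_assoc, Nat.cast_comm, areaForm]

theorem crossProduct_crossProduct_eq_zero {n u v : Fin 3 → R} (hu : n ⬝ᵥ u = 0) (hv : n ⬝ᵥ v = 0) :
    n ⨯₃ (u ⨯₃ v) = 0 := by
  rw [cross_cross_eq_smul_sub_smul', hv, dotProduct_comm, hu, zero_smul, zero_smul, sub_zero]

theorem dotProduct_ne_zero_of_crossProduct_eq_zero [IsDomain R] {a n w : Fin 3 → R}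
    (hw : w ≠ 0) (hnw : n ⨯₃ w = 0) (hna : n ⬝ᵥ a ≠ 0) : a ⬝ᵥ w ≠ 0 := by
  intro h
  have hcross := cross_cross_eq_smul_sub_smul' a n w
  rw [hnw, map_zero, h, zero_smul, zero_sub, eq_comm, neg_eq_zero, smul_eq_zero] at hcross
  exact hcross.elim hna hw

section Plane

variable {p q r : ℤ} {u v : Fin 3 → ℤ}

theorem areaForm_ne_zero (hpr : ¬(p = 0 ∧ r = 0)) (hu : ![p, q, r] ⬝ᵥ u = 0)
    (hv : ![p, q, r] ⬝ᵥ v = 0) (huv : u ⨯₃ v ≠ 0) : areaForm p r u v ≠ 0 := by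
  refine dotProduct_ne_zero_of_crossProduct_eq_zero huv
    (crossProduct_crossProduct_eq_zero hu hv) ?_
  simpa [vec3_dotProduct, mul_self_add_mul_self_eq_zero] using hpr

theorem shearRate_ne_zero_or (hpq : ¬(p = 0 ∧ q = 0)) (hpr : ¬(p = 0 ∧ r = 0))
    (hqr : ¬(q = 0 ∧ r = 0)) (hu : ![p, q, r] ⬝ᵥ u = 0) (hv : ![p, q, r] ⬝ᵥ v = 0)
    (huv : u ⨯₃ v ≠ 0) : shearRate p r u ≠ 0 ∨ shearRate p r v ≠ 0 := by
  by_contra! h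
  have hn := crossProduct_crossProduct_eq_zero hu hv
  have hμ := crossProduct_crossProduct_eq_zero h.1 h.2
  apply huv
  generalize u ⨯₃ v = w at hn hμ ⊢
  simp only [cross_apply, Matrix.cons_val, Matrix.cons_eq_zero_iff, sub_eq_zero, zero_mul,
    zero_sub, sub_zero, neg_mul, neg_eq_zero, mul_eq_zero] at hn hμ
  obtain ⟨hn₀, hn₁, hn₂, -⟩ := hn
  obtain ⟨hr, hμ₁, hp, -⟩ := hμ
  have hw₁ : w 1 = 0 := by tauto
  have hr₀ : r = 0 ∨ w 0 = 0 := mul_eq_zero.1 (by linarith)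
  have hp₂ : p = 0 ∨ w 2 = 0 := mul_eq_zero.1 (by linarith)
  have hq₀ : q = 0 ∨ w 0 = 0 := mul_eq_zero.1 (by rw [← hn₂, hw₁, mul_zero])
  have hq₂ : q = 0 ∨ w 2 = 0 := mul_eq_zero.1 (by rw [hn₀, hw₁, mul_zero])
  have hw₀ : w 0 = 0 := by tauto
  have hw₂ : w 2 = 0 := by tauto
  ext i
  fin_cases i <;> assumption

end Plane

end CrossProduct
@[simp]
theorem phi0_UT (a b c d e f : ℤ) : phi0 (UT a b c d e f) = ![a, b, c] := rfl

theorem UT_mul (a b c d e f a' b' c' d' e' f' : ℤ) :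
    UT a b c d e f * UT a' b' c' d' e' f' =
      UT (a + a') (b + b') (c + c') (d + d' + a * b') (e + e' + b * c')
        (f + f' + a * e' + d * c') := by
  ext i j
  fin_cases i <;> fin_cases j <;>
    simp [UT, Matrix.mul_apply, Fin.sum_univ_four] <;> ring

theorem UT_zero : UT 0 0 0 0 0 0 = 1 := by
  ext i j
  fin_cases i <;> fin_cases j <;> rfl

/-- The monoid of unitriangular matrices whose `φ0`-image lies on the plane with normal vector
`(p, q, r)`. -/
def planarUT (p q r : ℤ) : Submonoid (Matrix (Fin 4) (Fin 4) ℤ) where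
  carrier := {M | ∃ a b c d e f, M = UT a b c d e f ∧ p * a + q * b + r * c = 0}
  one_mem' := ⟨0, 0, 0, 0, 0, 0, UT_zero.symm, by simp⟩
  mul_mem' := by
    rintro _ _ ⟨a, b, c, d, e, f, rfl, h⟩ ⟨a', b', c', d', e', f', rfl, h'⟩
    exact ⟨_, _, _, _, _, _, UT_mul .., by linear_combination h + h'⟩

/-- `2Δ` as a function of the matrix; the factor `2` keeps it integral. -/
def twoDelta (M : Matrix (Fin 4) (Fin 4) ℤ) : ℤ := 2 * M 0 2 - M 0 1 * M 1 2

/-- `2ℰ` as a function of the matrix; the factor `2` keeps it integral. -/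
def twoEpsilon (M : Matrix (Fin 4) (Fin 4) ℤ) : ℤ := 2 * M 1 3 - M 1 2 * M 2 3

@[simp]
theorem twoDelta_UT (a b c d e f : ℤ) : twoDelta (UT a b c d e f) = 2 * d - a * b := rfl

@[simp]
theorem twoEpsilon_UT (a b c d e f : ℤ) : twoEpsilon (UT a b c d e f) = 2 * e - b * c := rfl

/-- The combination of `2Δ` and `2ℰ` complementary to `p · 2Δ - r · 2ℰ`. -/
def drift (p r : ℤ) (M : Matrix (Fin 4) (Fin 4) ℤ) : ℤ := r * twoDelta M + p * twoEpsilon M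

/-- Coordinates on the kernel of `linearInvariant`. The corner entry is scaled by
`2 (p² + r²)` so that conjugation by `u` becomes the shear of rate `shearRate p r (phi0 u)`. -/
def kernelCoords (p r : ℤ) (M : Matrix (Fin 4) (Fin 4) ℤ) : ℤ × ℤ :=
  (drift p r M, 2 * (p ^ 2 + r ^ 2) * M 0 3)

@[simp]
theorem kernelCoords_UT (p r a b c d e f : ℤ) : kernelCoords p r (UT a b c d e f) =
    (r * (2 * d - a * b) + p * (2 * e - b * c), 2 * (p ^ 2 + r ^ 2) * f) := rfl

section Planar

open Matrix

variable {p q r : ℤ}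

theorem normal_dotProduct_phi0 (g : planarUT p q r) :
    ![p, q, r] ⬝ᵥ phi0 (g : Matrix (Fin 4) (Fin 4) ℤ) = 0 := by
  obtain ⟨_, a, b, c, d, e, f, rfl, h⟩ := g
  simpa [add_assoc] using h

theorem phi0_mul (g h : planarUT p q r) :
    phi0 (g * h : Matrix (Fin 4) (Fin 4) ℤ) = phi0 g + phi0 h := by
  obtain ⟨_, a, b, c, d, e, f, rfl, -⟩ := g
  obtain ⟨_, a', b', c', d', e', f', rfl, -⟩ := h
  simp [UT_mul]

/-- The homomorphism `g ↦ (φ0 g, p · 2Δ g - r · 2ℰ g)`. -/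
def linearInvariant (p q r : ℤ) : planarUT p q r →* Multiplicative ((Fin 3 → ℤ) × ℤ) where
  toFun g := Multiplicative.ofAdd (phi0 g, p * twoDelta g - r * twoEpsilon g)
  map_one' := by
    rw [Submonoid.coe_one, ← UT_zero]
    simp [Prod.ext_iff]
  map_mul' := by
    rintro ⟨_, a, b, c, d, e, f, rfl, h⟩ ⟨_, a', b', c', d', e', f', rfl, h'⟩
    rw [← ofAdd_add, Submonoid.coe_mul, phi0_mul, Prod.mk_add_mk, UT_mul]
    congr 2
    simp only [twoDelta_UT, twoEpsilon_UT]
    linear_combination b' * h - b * h'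

theorem exists_eq_UT_of_linearInvariant_eq_one {g : planarUT p q r}
    (hg : linearInvariant p q r g = 1) :
    ∃ d e f, (g : Matrix (Fin 4) (Fin 4) ℤ) = UT 0 0 0 d e f ∧ p * d = r * e := by
  obtain ⟨a, b, c, d, e, f, hUT, -⟩ := g.2
  have h₁ : phi0 (g : Matrix (Fin 4) (Fin 4) ℤ) = 0 := congrArg (fun x => x.toAdd.1) hg
  have h₂ : p * twoDelta g - r * twoEpsilon g = 0 := congrArg (fun x => x.toAdd.2) hg
  rw [hUT] at h₁ h₂
  obtain ⟨rfl, rfl, rfl, -⟩ := by simpa only [phi0_UT, Matrix.cons_eq_zero_iff] using h₁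
  simp only [twoDelta_UT, twoEpsilon_UT] at h₂
  exact ⟨d, e, f, hUT, by linarith⟩

theorem phi0_add_eq_zero {u v : planarUT p q r} (huv : linearInvariant p q r (u * v) = 1) :
    phi0 (u : Matrix (Fin 4) (Fin 4) ℤ) + phi0 v = 0 := by
  rw [map_mul] at huv
  exact congrArg (fun x => x.toAdd.1) huv

theorem phi0_pow (g : planarUT p q r) (n : ℕ) :
    phi0 (g ^ n : Matrix (Fin 4) (Fin 4) ℤ) = n • phi0 g :=
  congrArg (fun x => x.toAdd.1) (map_pow (linearInvariant p q r) g n)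

theorem drift_mul (g h : planarUT p q r) :
    drift p r (g * h) = drift p r g + drift p r h + areaForm p r (phi0 g) (phi0 h) := by
  obtain ⟨_, a, b, c, d, e, f, rfl, -⟩ := g
  obtain ⟨_, a', b', c', d', e', f', rfl, -⟩ := h
  simp only [drift, UT_mul, twoDelta_UT, twoEpsilon_UT, areaForm, phi0_UT, cross_apply,
    vec3_dotProduct, Matrix.cons_val]
  ring

theorem drift_pow (g : planarUT p q r) (n : ℕ) : drift p r (g ^ n) = n * drift p r g := by
  induction n with
  | zero => simp [drift, twoDelta, twoEpsilon]
  | succ n ih =>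
    have harea : areaForm p r (n • phi0 g) (phi0 g) = 0 := by
      simpa [areaForm_self] using areaForm_nsmul_nsmul p r n 1 (phi0 g) (phi0 g)
    rw [pow_succ, ← SubmonoidClass.coe_pow, drift_mul]
    rw [SubmonoidClass.coe_pow, ih, phi0_pow, harea]
    push_cast
    ring

theorem drift_pow_mul_pow_mul_pow {g h z : planarUT p q r}
    (hghz : linearInvariant p q r (g * h * z) = 1) (n : ℕ) :
    drift p r (g ^ n * h ^ n * z ^ n : planarUT p q r) =
      n * (drift p r g + drift p r h + drift p r z + n * areaForm p r (phi0 g) (phi0 h)) := by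
  have hz : phi0 (z : Matrix (Fin 4) (Fin 4) ℤ) = -(phi0 g + phi0 h) := by
    rw [← phi0_mul, eq_comm, neg_eq_iff_add_eq_zero]
    exact phi0_add_eq_zero hghz
  rw [Submonoid.coe_mul, drift_mul, Submonoid.coe_mul, drift_mul, phi0_mul]
  simp only [SubmonoidClass.coe_pow, drift_pow, phi0_pow, hz, ← smul_add]
  rw [areaForm_nsmul_nsmul, areaForm_nsmul_nsmul, areaForm_neg_right, areaForm_self]
  ring

theorem shearRate_eq_neg {u v : planarUT p q r} (huv : linearInvariant p q r (u * v) = 1) :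
    shearRate p r (phi0 u) = -shearRate p r (phi0 v) := by
  rw [shearRate, eq_neg_of_add_eq_zero_left (phi0_add_eq_zero huv), dotProduct_neg, shearRate]

theorem kernelCoords_mul {g h : planarUT p q r} (hg : linearInvariant p q r g = 1)
    (hh : linearInvariant p q r h = 1) :
    kernelCoords p r (g * h) = kernelCoords p r g + kernelCoords p r h := by
  obtain ⟨d, e, f, hg, -⟩ := exists_eq_UT_of_linearInvariant_eq_one hg
  obtain ⟨d', e', f', hh, -⟩ := exists_eq_UT_of_linearInvariant_eq_one hh
  rw [hg, hh, UT_mul]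
  simp only [kernelCoords_UT, Prod.mk_add_mk, add_zero, mul_zero, zero_mul, sub_zero]
  congr 1 <;> ring

theorem kernelCoords_pow {g : planarUT p q r} (hg : linearInvariant p q r g = 1) (n : ℕ) :
    kernelCoords p r (g ^ n) = n • kernelCoords p r g := by
  induction n with
  | zero => simp [kernelCoords, drift, twoDelta, twoEpsilon]
  | succ n ih =>
    rw [pow_succ, ← SubmonoidClass.coe_pow, kernelCoords_mul (by rw [map_pow, hg, one_pow]) hg,
      SubmonoidClass.coe_pow, ih, succ_nsmul]

theorem kernelCoords_conj {u v w : planarUT p q r} (huv : linearInvariant p q r (u * v) = 1)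
    (hw : linearInvariant p q r w = 1) :
    kernelCoords p r (u * w * v) = kernelCoords p r (u * v) + (kernelCoords p r w +
      (0, shearRate p r (phi0 u) * drift p r w)) := by
  obtain ⟨d, e, f, hw, hde⟩ := exists_eq_UT_of_linearInvariant_eq_one hw
  have huv₀ := phi0_add_eq_zero huv
  obtain ⟨a₁, b₁, c₁, d₁, e₁, f₁, hu, -⟩ := u.2
  obtain ⟨a₂, b₂, c₂, d₂, e₂, f₂, hv, -⟩ := v.2
  rw [hu, hv] at huv₀
  simp only [phi0_UT, Matrix.cons_add_cons, Matrix.cons_eq_zero_iff] at huv₀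
  obtain ⟨-, -, hc, -⟩ := huv₀
  rw [hu, hv, hw, UT_mul, UT_mul, UT_mul]
  simp only [kernelCoords_UT, drift, twoDelta_UT, twoEpsilon_UT, shearRate, phi0_UT,
    vec3_dotProduct, Matrix.cons_val, Prod.mk_add_mk, add_zero, mul_zero, zero_mul, sub_zero]
  congr 1
  · ring
  · linear_combination 2 * (p ^ 2 + r ^ 2) * d * hc - 2 * (r * a₁ + p * c₁) * hde

theorem eq_one_of_kernelCoords_eq_zero (hpr : ¬(p = 0 ∧ r = 0)) {g : planarUT p q r}
    (hg : linearInvariant p q r g = 1) (h : kernelCoords p r g = 0) : g = 1 := by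
  obtain ⟨d, e, f, hg, hde⟩ := exists_eq_UT_of_linearInvariant_eq_one hg
  have hne : p ^ 2 + r ^ 2 ≠ 0 := by
    simpa [sq, mul_self_add_mul_self_eq_zero] using hpr
  rw [hg] at h
  simp only [kernelCoords_UT, mul_zero, sub_zero, Prod.mk_eq_zero, mul_eq_zero, hne,
    OfNat.ofNat_ne_zero, false_or] at h
  obtain ⟨h, rfl⟩ := h
  have hd : (p ^ 2 + r ^ 2) * d = 0 := by linarith [congrArg (p * ·) hde, congrArg (r * ·) h]
  have he : (p ^ 2 + r ^ 2) * e = 0 := by linarith [congrArg (r * ·) hde, congrArg (p * ·) h]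
  rw [mul_eq_zero, or_iff_right hne] at hd he
  apply Subtype.ext
  rw [hg, hd, he, UT_zero, Submonoid.coe_one]

end Planar

section KernelVectors

variable {p q r : ℤ}

/-- The values of `linearInvariant` on `S`: an element of `S` can be completed to a kernel element
within `S` if the inverse of its value is among them. -/
def invariants (S : Subsemigroup (planarUT p q r)) :
    Subsemigroup (Multiplicative ((Fin 3 → ℤ) × ℤ)) :=
  S.map (linearInvariant p q r : _ →ₙ* _)

/-- The coordinates of the elements of `S` in the kernel of `linearInvariant`. -/
def kernelVectors (S : Subsemigroup (planarUT p q r)) : AddSubsemigroup (ℤ × ℤ) where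
  carrier := {x | ∃ g ∈ S, linearInvariant p q r g = 1 ∧ kernelCoords p r g = x}
  add_mem' := by
    rintro _ _ ⟨g, hg, hg₁, rfl⟩ ⟨h, hh, hh₁, rfl⟩
    exact ⟨g * h, S.mul_mem hg hh, by rw [map_mul, hg₁, hh₁, mul_one], kernelCoords_mul hg₁ hh₁⟩

variable {S : Subsemigroup (planarUT p q r)}

theorem one_mem_of_zero_mem_kernelVectors (hpr : ¬(p = 0 ∧ r = 0)) (h : 0 ∈ kernelVectors S) :
    1 ∈ S := by
  obtain ⟨g, hg, hg₁, hg₂⟩ := h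
  rwa [← eq_one_of_kernelCoords_eq_zero hpr hg₁ hg₂]

theorem exists_mem_kernelVectors_fst_mul_areaForm_pos {g h : planarUT p q r} (hg : g ∈ S)
    (hh : h ∈ S)
    (hinv : (linearInvariant p q r (g * h))⁻¹ ∈ invariants S)
    (hω : areaForm p r (phi0 g) (phi0 h) ≠ 0) :
    ∃ x ∈ kernelVectors S, 0 < x.1 * areaForm p r (phi0 g) (phi0 h) := by
  obtain ⟨z, hz, hz₁ : linearInvariant p q r z = _⟩ := hinv
  have hghz : linearInvariant p q r (g * h * z) = 1 := by rw [map_mul, hz₁, mul_inv_cancel]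
  obtain ⟨n, hpos, hn⟩ := ((eventually_pos_add_natCast_mul_mul
    (drift p r g + drift p r h + drift p r z) hω).and (Filter.eventually_ne_atTop 0)).exists
  refine ⟨_, ⟨g ^ n * h ^ n * z ^ n, S.mul_mem (S.mul_mem (pow_mem_of_ne_zero hg hn)
    (pow_mem_of_ne_zero hh hn)) (pow_mem_of_ne_zero hz hn), ?_, rfl⟩, ?_⟩
  · rw [map_mul, map_mul, map_pow, map_pow, map_pow, ← mul_pow, ← mul_pow, ← map_mul, ← map_mul,
      hghz, one_pow]
  · rw [kernelCoords, drift_pow_mul_pow_mul_pow hghz, mul_assoc]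
    exact mul_pos (by positivity) hpos

theorem exists_mem_kernelVectors_fst_pos_and_fst_neg {g h : planarUT p q r} (hg : g ∈ S)
    (hh : h ∈ S)
    (hinv : (linearInvariant p q r (g * h))⁻¹ ∈ invariants S)
    (hω : areaForm p r (phi0 g) (phi0 h) ≠ 0) :
    ∃ x ∈ kernelVectors S, ∃ y ∈ kernelVectors S, 0 < x.1 ∧ y.1 < 0 := by
  have hω' : areaForm p r (phi0 h) (phi0 g) = -areaForm p r (phi0 g) (phi0 h) := areaForm_swap ..
  obtain ⟨x, hx, hx₁⟩ := exists_mem_kernelVectors_fst_mul_areaForm_pos hg hh hinv hω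
  obtain ⟨y, hy, hy₁⟩ := exists_mem_kernelVectors_fst_mul_areaForm_pos hh hg
    (by rwa [map_mul, mul_comm, ← map_mul]) (by rwa [hω', neg_ne_zero])
  rw [hω'] at hy₁
  rcases hω.lt_or_gt with hω | hω
  · exact ⟨y, hy, x, hx, (pos_iff_pos_of_mul_pos hy₁).2 (neg_pos.2 hω),
      (neg_iff_neg_of_mul_pos hx₁).2 hω⟩
  · exact ⟨x, hx, y, hy, (pos_iff_pos_of_mul_pos hx₁).2 hω,
      (neg_iff_neg_of_mul_pos hy₁).2 (neg_neg_iff_pos.2 hω)⟩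

theorem exists_add_nsmul_mem_kernelVectors {u v : planarUT p q r} (hu : u ∈ S) (hv : v ∈ S)
    (huv : linearInvariant p q r (u * v) = 1) {x : ℤ × ℤ} (hx : x ∈ kernelVectors S) {m : ℕ}
    (hm : m ≠ 0) : ∃ c, ∀ n : ℕ, n ≠ 0 →
      c + n • (x.1, x.2 + m * (shearRate p r (phi0 u) * x.1)) ∈ kernelVectors S := by
  obtain ⟨w, hw, hw₁, rfl⟩ := hx
  have huv' : linearInvariant p q r (u ^ m * v ^ m) = 1 := by
    rw [map_mul, map_pow, map_pow, ← mul_pow, ← map_mul, huv, one_pow]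
  refine ⟨kernelCoords p r (u ^ m * v ^ m), fun n hn => ⟨u ^ m * w ^ n * v ^ m, S.mul_mem
    (S.mul_mem (pow_mem_of_ne_zero hu hm) (pow_mem_of_ne_zero hw hn)) (pow_mem_of_ne_zero hv hm),
    ?_, ?_⟩⟩
  · rw [map_mul, map_mul, map_pow _ w, hw₁, one_pow, mul_one, ← map_mul, huv']
  · have hconj := kernelCoords_conj huv' (w := w ^ n) (by rw [map_pow, hw₁, one_pow])
    simp only [SubmonoidClass.coe_pow, Submonoid.coe_mul] at hconj ⊢
    rw [hconj, kernelCoords_pow hw₁, phi0_pow, drift_pow, shearRate_nsmul]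
    rw [add_right_inj, kernelCoords, Prod.smul_mk, Prod.smul_mk, Prod.mk_add_mk, add_zero]
    simp only [nsmul_eq_mul]
    congr 1
    ring

theorem exists_mem_kernelVectors_snd_mul_shearRate_pos {u v : planarUT p q r} (hu : u ∈ S)
    (hv : v ∈ S) (huv : linearInvariant p q r (u * v) = 1) (hμ : shearRate p r (phi0 u) ≠ 0)
    {x : ℤ × ℤ} (hx : x ∈ kernelVectors S) (hx₁ : x.1 ≠ 0) :
    ∃ y ∈ kernelVectors S, 0 < y.1 * x.1 ∧ 0 < y.2 * (shearRate p r (phi0 u) * x.1) := by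
  obtain ⟨m, hpos, hm⟩ := ((eventually_pos_add_natCast_mul_mul x.2 (mul_ne_zero hμ hx₁)).and
    (Filter.eventually_ne_atTop 0)).exists
  obtain ⟨c, hc⟩ := exists_add_nsmul_mem_kernelVectors hu hv huv hx hm
  set v' := (x.1, x.2 + m * (shearRate p r (phi0 u) * x.1))
  have hne : v'.2 ≠ 0 := left_ne_zero_of_mul hpos.ne'
  obtain ⟨y, hy, hy₁, hy₂⟩ := exists_mem_same_quadrant (v := v') hx₁ hne hc
  refine ⟨y, hy, hy₁, pos_of_mul_pos_left ?_ (mul_self_nonneg v'.2)⟩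
  linarith [mul_pos hy₂ hpos]

theorem exists_mem_kernelVectors_snd_pos_and_snd_neg {u : planarUT p q r} (hu : u ∈ S)
    (hinv : (linearInvariant p q r u)⁻¹ ∈ invariants S) (hμ : shearRate p r (phi0 u) ≠ 0)
    {x : ℤ × ℤ} (hx : x ∈ kernelVectors S) (hx₁ : x.1 ≠ 0) :
    (∃ y ∈ kernelVectors S, 0 < y.1 * x.1 ∧ 0 < y.2) ∧
      ∃ y ∈ kernelVectors S, 0 < y.1 * x.1 ∧ y.2 < 0 := by
  obtain ⟨v, hv, hv₁ : linearInvariant p q r v = _⟩ := hinv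
  have huv : linearInvariant p q r (u * v) = 1 := by rw [map_mul, hv₁, mul_inv_cancel]
  have hvu : linearInvariant p q r (v * u) = 1 := by rw [map_mul, hv₁, inv_mul_cancel]
  have hμv : shearRate p r (phi0 v) = -shearRate p r (phi0 u) := shearRate_eq_neg hvu
  obtain ⟨a, ha, ha₁, ha₂⟩ := exists_mem_kernelVectors_snd_mul_shearRate_pos hu hv huv hμ hx hx₁
  obtain ⟨b, hb, hb₁, hb₂⟩ := exists_mem_kernelVectors_snd_mul_shearRate_pos hv hu hvu
    (by rwa [hμv, neg_ne_zero]) hx hx₁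
  rw [hμv, neg_mul, mul_neg, neg_pos] at hb₂
  rcases (mul_ne_zero hμ hx₁).lt_or_gt with h | h
  · exact ⟨⟨b, hb, hb₁, (pos_iff_neg_of_mul_neg hb₂).2 h⟩,
      ⟨a, ha, ha₁, (neg_iff_neg_of_mul_pos ha₂).2 h⟩⟩
  · exact ⟨⟨a, ha, ha₁, (pos_iff_pos_of_mul_pos ha₂).2 h⟩,
      ⟨b, hb, hb₁, (neg_iff_pos_of_mul_neg hb₂).2 h⟩⟩

theorem one_mem_of_areaForm_ne_zero_of_shearRate_ne_zero {g h u : planarUT p q r}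
    (hg : g ∈ S) (hh : h ∈ S) (hu : u ∈ S)
    (hginv : (linearInvariant p q r g)⁻¹ ∈ invariants S)
    (hhinv : (linearInvariant p q r h)⁻¹ ∈ invariants S)
    (huinv : (linearInvariant p q r u)⁻¹ ∈ invariants S)
    (hω : areaForm p r (phi0 g) (phi0 h) ≠ 0) (hμ : shearRate p r (phi0 u) ≠ 0) : 1 ∈ S := by
  have hpr : ¬(p = 0 ∧ r = 0) := by
    rintro ⟨rfl, rfl⟩
    simp [shearRate] at hμ
  have hghinv : (linearInvariant p q r (g * h))⁻¹ ∈ invariants S := by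
    rw [map_mul, mul_inv]
    exact mul_mem hginv hhinv
  obtain ⟨x, hx, y, hy, hx₁, hy₁⟩ :=
    exists_mem_kernelVectors_fst_pos_and_fst_neg hg hh hghinv hω
  exact one_mem_of_zero_mem_kernelVectors hpr (zero_mem_of_quadrants hx hy hx₁ hy₁
    (fun _ hc hc₁ => (exists_mem_kernelVectors_snd_pos_and_snd_neg hu huinv hμ hc hc₁).1)
    fun _ hc hc₁ => (exists_mem_kernelVectors_snd_pos_and_snd_neg hu huinv hμ hc hc₁).2)

end KernelVectors

section Generators

variable {k : ℕ} {α β κ δ ε φ : Fin k → ℤ} {A : Fin k → Matrix (Fin 4) (Fin 4) ℤ} {p q r : ℤ}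

theorem prod_linearInvariant_pow_eq_one (hA : ∀ i, A i = UT (α i) (β i) (κ i) (δ i) (ε i) (φ i))
    {G : Fin k → planarUT p q r} (hG : ∀ i, (G i : Matrix (Fin 4) (Fin 4) ℤ) = A i)
    {ℓ : Fin k → ℕ} (hℓ : InL0 A α β κ δ ε p r ℓ) :
    ∏ i, linearInvariant p q r (G i) ^ ℓ i = 1 := by
  have h₂ : ∑ i, ℓ i * (p * twoDelta (A i) - r * twoEpsilon (A i)) = 0 := by
    have hcast := congrArg (2 * ·) hℓ.2
    simp only [Finset.mul_sum, ← Finset.sum_sub_distrib, mul_zero] at hcast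
    rw [← Int.cast_inj (α := ℚ)]
    push_cast
    rw [← hcast]
    refine Finset.sum_congr rfl fun i _ => ?_
    simp only [hA, twoDelta_UT, twoEpsilon_UT]
    push_cast
    ring
  apply Multiplicative.toAdd.injective
  rw [toAdd_prod, toAdd_one]
  ext1
  · simpa [linearInvariant, hG, Prod.fst_sum] using hℓ.1
  · simpa [linearInvariant, hG, Prod.snd_sum] using h₂

end Generators

theorem stmt18 (k : ℕ) (α β κ δ ε φ : Fin k → ℤ)
    (A : Fin k → Matrix (Fin 4) (Fin 4) ℤ)
    (hA : ∀ i, A i = UT (α i) (β i) (κ i) (δ i) (ε i) (φ i))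
    (hClin : coneFin (fun i => phi0R (A i)) =
      coneFin (fun i => phi0R (A i)) ∩ -(coneFin (fun i => phi0R (A i))))
    (hdim : Module.finrank ℝ
      (Submodule.span ℝ (coneFin (fun i => phi0R (A i)))) = 2)
    (p q r : ℤ)
    (hpq : ¬(p = 0 ∧ q = 0)) (hpr : ¬(p = 0 ∧ r = 0)) (hqr : ¬(q = 0 ∧ r = 0))
    (hrel : ∀ i, p * α i + q * β i + r * κ i = 0)
    (hsupp : ∀ j : Fin k, ∃ ℓ : Fin k → ℕ, InL0 A α β κ δ ε p r ℓ ∧ 0 < ℓ j) :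
    (1 : Matrix (Fin 4) (Fin 4) ℤ) ∈ Subsemigroup.closure (Set.range A) := by
  have hmem (i) : A i ∈ planarUT p q r := ⟨_, _, _, _, _, _, hA i, hrel i⟩
  let G (i) : planarUT p q r := ⟨A i, hmem i⟩
  let S := (Subsemigroup.closure (Set.range A)).comap (MulMemClass.subtype (planarUT p q r))
  have hG (i) : G i ∈ S := Subsemigroup.subset_closure (Set.mem_range_self i)
  have hinv (j) : (linearInvariant p q r (G j))⁻¹ ∈ invariants S := by
    obtain ⟨ℓ, hℓ, hj⟩ := hsupp j
    exact inv_mem_of_prod_pow_eq_one (fun i => Subsemigroup.mem_map_of_mem _ (hG i))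
      (prod_linearInvariant_pow_eq_one hA (fun _ => rfl) hℓ) hj.ne'
  obtain ⟨i, j, hij⟩ := exists_crossProduct_phi0_ne_zero hdim
  have hi := normal_dotProduct_phi0 (G i)
  have hj := normal_dotProduct_phi0 (G j)
  have hω := areaForm_ne_zero hpr hi hj hij
  suffices 1 ∈ S from this
  rcases shearRate_ne_zero_or hpq hpr hqr hi hj hij with hμ | hμ
  · exact one_mem_of_areaForm_ne_zero_of_shearRate_ne_zero (hG i) (hG j) (hG i)
      (hinv i) (hinv j) (hinv i) hω hμ
  · exact one_mem_of_areaForm_ne_zero_of_shearRate_ne_zero (hG i) (hG j) (hG j)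
      (hinv i) (hinv j) (hinv j) hω hμ
end
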